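/- arXiv:1010.0086 — 7 statements merged into one kernel-verified Lean document; each statement's English description precedes it below -/
import Mathlib

section
/- Let a ∈ ℬ be a Lusztig datum and i ∈ I with ε_i(a) > 0. Then a_{k_e(a,i), i+1} ≥ 1; consequently the modified tuple ẽ_i a (obtained from a by increasing a_{k_e,i} by 1 and decreasing a_{k_e,i+1} by 1) has all entries nonnegative, i.e. ẽ_i a ∈ ℬ. -/
/-!
Since `k_e` is the first place where the partial sums `A_k` attain their positive maximum, the last
increment `A_{k_e} - A_{k_e - 1} = a_{k_e,i+1} - a_{k_e-1,i}` is positive, where `A_0 = 0`. As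
`a_{k_e-1,i}` is nonnegative, `a_{k_e,i+1}` is positive, so it can be decreased by one.
-/

theorem lt_of_lt_first_argmax {ι M : Type*} [Preorder ι] [PartialOrder M] {s : Set ι} {f : ι → M}
    {c : M} {j k : ι} (hmax : ∀ x ∈ s, f x ≤ c) (hfirst : ∀ x ∈ s, f x = c → k ≤ x)
    (hj : j ∈ s) (hjk : j < k) : f j < c :=
  (hmax j hj).lt_of_ne fun hjc => hjk.not_ge (hfirst j hj hjc)

theorem pos_of_sum_Icc_strict_record {ι M : Type*} [LinearOrder ι] [LocallyFiniteOrder ι]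
    [PredOrder ι] [AddCommMonoid M] [PartialOrder M] [IsOrderedCancelAddMonoid M] {f : ι → M}
    {m k : ι} (hpos : 0 < ∑ s ∈ Finset.Icc m k, f s)
    (hrecord : ∀ j ∈ Finset.Ico m k, ∑ s ∈ Finset.Icc m j, f s < ∑ s ∈ Finset.Icc m k, f s) :
    0 < f k := by
  have hmk : m ≤ k := by
    by_contra hmk
    simp [Finset.Icc_eq_empty hmk] at hpos
  have hlt : ∑ s ∈ Finset.Ico m k, f s < ∑ s ∈ Finset.Icc m k, f s := by
    obtain rfl | hmk := hmk.eq_or_lt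
    · simpa using hpos
    · have hpred : Order.pred k ∈ Finset.Ico m k :=
        Finset.mem_Ico.2 ⟨Order.le_pred_of_lt hmk, Order.pred_lt_of_not_isMin hmk.not_isMin⟩
      rw [← Finset.Icc_pred_right_eq_Ico_of_not_isMin hmk.not_isMin]
      exact hrecord _ hpred
  rw [← Finset.sum_Ico_add_eq_sum_Icc hmk] at hlt
  exact pos_of_lt_add_right hlt

/-- The partial sum `A_k^{(i)}(a)`, whose maximum over `1 ≤ k ≤ i` is `ε_i(a)`. It is `0` for
`k ≤ 0`. -/
noncomputable def crystalPartialSum (a : ℤ → ℤ → ℤ) (i k : ℤ) : ℤ :=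
  ∑ s ∈ Finset.Icc 1 k, (a s (i + 1) - a (s - 1) i)

/-- The array obtained from `a` by moving one unit from the entry `(k, i + 1)` to the entry
`(k, i)`; for `k = k_e(a, i)` this is `ẽ_i a`. When `i ≤ k` the entry `(k, i)` is out of range and
its increase is discarded. -/
def crystalRaiseAt (a : ℤ → ℤ → ℤ) (i k : ℤ) : ℤ → ℤ → ℤ := fun p q =>
  if p = k ∧ q = i ∧ k < i then a p q + 1
  else if p = k ∧ q = i + 1 then a p q - 1
  else a p q

section

variable {a : ℤ → ℤ → ℤ} {i k : ℤ}

theorem crystalRaiseAt_nonneg (ha : ∀ p q, 0 ≤ a p q) (hk : 1 ≤ a k (i + 1)) (p q : ℤ) :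
    0 ≤ crystalRaiseAt a i k p q := by
  have hpq := ha p q
  unfold crystalRaiseAt
  split_ifs with hraised hlowered
  · lia
  · obtain ⟨rfl, rfl⟩ := hlowered
    lia
  · exact hpq

theorem one_le_of_crystalPartialSum_first_max (ha : 0 ≤ a (k - 1) i) (hki : k ≤ i)
    (hmax : ∀ j ∈ Finset.Icc 1 i, crystalPartialSum a i j ≤ crystalPartialSum a i k)
    (hfirst : ∀ j ∈ Finset.Icc 1 i, crystalPartialSum a i j = crystalPartialSum a i k → k ≤ j)
    (hpos : 0 < crystalPartialSum a i k) : 1 ≤ a k (i + 1) := by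
  have hrecord : ∀ j ∈ Finset.Ico 1 k, crystalPartialSum a i j < crystalPartialSum a i k := by
    intro j hj
    obtain ⟨h1j, hjk⟩ := Finset.mem_Ico.1 hj
    exact lt_of_lt_first_argmax (s := Finset.Icc 1 i) hmax hfirst
      (Finset.mem_Icc.2 ⟨h1j, hjk.le.trans hki⟩) hjk
  have hincrement : 0 < a k (i + 1) - a (k - 1) i :=
    pos_of_sum_Icc_strict_record (f := fun s => a s (i + 1) - a (s - 1) i) hpos hrecord
  lia

theorem stmt0_general (ha : ∀ p q, 0 ≤ a p q) (hki : k ≤ i)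
    (hmax : ∀ j ∈ Finset.Icc 1 i, crystalPartialSum a i j ≤ crystalPartialSum a i k)
    (hfirst : ∀ j ∈ Finset.Icc 1 i, crystalPartialSum a i j = crystalPartialSum a i k → k ≤ j)
    (hpos : 0 < crystalPartialSum a i k) :
    1 ≤ a k (i + 1) ∧ ∀ p q, 0 ≤ crystalRaiseAt a i k p q :=
  have hk := one_le_of_crystalPartialSum_first_max (ha (k - 1) i) hki hmax hfirst hpos
  ⟨hk, crystalRaiseAt_nonneg ha hk⟩

end

/-- For a Lusztig datum `a` (modeled as an integer-valued function on `ℤ × ℤ`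
that is nonnegative everywhere and vanishes off `Π = {(k,l) : 1 ≤ k < l ≤ n+1}`) and
`i ∈ [1,n]` with `ε_i(a) > 0`, the entry `a_{k_e, i+1}` is at least `1`; consequently the
modified tuple `ẽ_i a` (increase `a_{k_e,i}` by 1 — discarded if `k_e = i`, since then the
entry is out of range — and decrease `a_{k_e,i+1}` by 1) has all entries nonnegative. -/
theorem stmt0 (n : ℕ) (hn : 1 ≤ n) (a : ℤ → ℤ → ℤ)
    (hnn : ∀ k l : ℤ, 0 ≤ a k l)
    (hsupp : ∀ k l : ℤ, ¬(1 ≤ k ∧ k < l ∧ l ≤ (n : ℤ) + 1) → a k l = 0)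
    (i : ℤ) (hi1 : 1 ≤ i) (hi2 : i ≤ (n : ℤ))
    (A : ℤ → ℤ) (hA : ∀ k, A k = ∑ s ∈ Finset.Icc 1 k, (a s (i + 1) - a (s - 1) i))
    (ε : ℤ) (hub : ∀ k ∈ Finset.Icc 1 i, A k ≤ ε)
    (hmem : ∃ k ∈ Finset.Icc 1 i, A k = ε)
    (hεpos : 0 < ε)
    (ke : ℤ) (hke : ke ∈ Finset.Icc 1 i) (hkeval : A ke = ε)
    (hkemin : ∀ k ∈ Finset.Icc 1 i, A k = ε → ke ≤ k) :
    1 ≤ a ke (i + 1) ∧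
      ∀ k l : ℤ,
        0 ≤ (if k = ke ∧ l = i ∧ ke < i then a k l + 1
             else if k = ke ∧ l = i + 1 then a k l - 1
             else a k l) := by
  obtain rfl : A = crystalPartialSum a i := funext hA
  subst hkeval
  exact stmt0_general hnn (Finset.mem_Icc.1 hke).2 hub hkemin hεpos
end

section
/- Let a ∈ ℬ be a Lusztig datum and i ∈ I with ε_i^*(a) > 0. Then a_{i, l_e(a,i)+1} ≥ 1; consequently the modified tuple ẽ_i^* a (obtained from a by decreasing a_{i,l_e+1} by 1 and increasing a_{i+1,l_e+1} by 1) has all entries nonnegative, i.e. ẽ_i^* a ∈ ℬ. -/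
/-!
The partial sums satisfy `A_l = (a_{i,l+1} - a_{i+1,l+2}) + A_{l+1}`, and `A_{n+1} = 0` is an empty
sum. Since `A` takes a positive maximum at `l_e` for the last time, `A_{l_e+1} < A_{l_e}`, even if
`l_e = n`. Hence `a_{i,l_e+1} > a_{i+1,l_e+2} ≥ 0`, so the only decreased entry stays nonnegative.
-/

theorem pos_of_sum_Ioc_lt_sum_Icc {ι M : Type*} [PartialOrder ι] [LocallyFiniteOrder ι]
    [AddCommMonoid M] [Preorder M] [AddRightReflectLT M] {f : ι → M} {l b : ι}
    (h : ∑ t ∈ Finset.Ioc l b, f t < ∑ t ∈ Finset.Icc l b, f t) : 0 < f l := by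
  by_cases hlb : l ≤ b
  · rw [← Finset.add_sum_Ioc_eq_sum_Icc hlb] at h
    exact pos_of_lt_add_left h
  · rw [Finset.Ioc_eq_empty (mt le_of_lt hlb), Finset.Icc_eq_empty hlb] at h
    exact absurd h (lt_irrefl _)

/-- The partial sum `A_l^{*(i)}(a)`, whose maximum over `l ∈ [i, n]` is `ε_i^*(a)`. It is defined
for every integer `l`, and vanishes for `l > n`. -/
noncomputable def starSum (n : ℤ) (a : ℤ → ℤ → ℤ) (i l : ℤ) : ℤ :=
  ∑ t ∈ Finset.Icc (l + 1) (n + 1), (a i t - a (i + 1) (t + 1))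

/-- The tuple obtained from `a` by moving one unit from the entry `(i, l + 1)` to `(i + 1, l + 1)`;
it is `ẽ_i^* a` when `l = l_e(a, i)`. For `l ≤ i` the entry `(i + 1, l + 1)` is out of range, and
its increase is discarded. -/
def starRaise (a : ℤ → ℤ → ℤ) (i l : ℤ) : ℤ → ℤ → ℤ := fun k m =>
  if k = i ∧ m = l + 1 then a k m - 1
  else if k = i + 1 ∧ m = l + 1 ∧ i < l then a k m + 1
  else a k m

section

variable {n i l : ℤ} {a : ℤ → ℤ → ℤ}

theorem starSum_eq_zero_of_lt (h : n < l) : starSum n a i l = 0 := by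
  rw [starSum, Finset.Icc_eq_empty_of_lt (by lia), Finset.sum_empty]

theorem starSum_add_one_lt_of_last_max (hpos : 0 < starSum n a i l)
    (hlast : ∀ k ∈ Finset.Ioc l n, starSum n a i k < starSum n a i l) :
    starSum n a i (l + 1) < starSum n a i l := by
  rcases le_or_gt (l + 1) n with hle | hlt
  · exact hlast (l + 1) (Finset.mem_Ioc.mpr ⟨lt_add_one l, hle⟩)
  · rwa [starSum_eq_zero_of_lt hlt]

theorem entry_lt_of_starSum_add_one_lt (h : starSum n a i (l + 1) < starSum n a i l) :
    a (i + 1) (l + 1 + 1) < a i (l + 1) := by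
  rw [starSum, starSum, Finset.Icc_add_one_left_eq_Ioc (l + 1)] at h
  exact sub_pos.mp (pos_of_sum_Ioc_lt_sum_Icc (f := fun t => a i t - a (i + 1) (t + 1)) h)

theorem starRaise_nonneg (ha : ∀ k m, 0 ≤ a k m) (hentry : 1 ≤ a i (l + 1)) (k m : ℤ) :
    0 ≤ starRaise a i l k m := by
  unfold starRaise
  split_ifs with hdec
  · obtain ⟨rfl, rfl⟩ := hdec
    exact sub_nonneg.mpr hentry
  · exact add_nonneg (ha k m) zero_le_one
  · exact ha k m

end

/-- For a Lusztig datum `a` and `i ∈ [1,n]` with `ε_i^*(a) > 0`, the entry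
`a_{i, l_e+1}` is at least `1`; consequently the modified tuple `ẽ_i^* a` (decrease
`a_{i,l_e+1}` by 1 and increase `a_{i+1,l_e+1}` by 1 — the latter discarded if `l_e = i`,
since then the entry `(i+1,i+1)` is out of range) has all entries nonnegative. -/
theorem stmt1 (n : ℕ) (hn : 1 ≤ n) (a : ℤ → ℤ → ℤ)
    (hnn : ∀ k l : ℤ, 0 ≤ a k l)
    (hsupp : ∀ k l : ℤ, ¬(1 ≤ k ∧ k < l ∧ l ≤ (n : ℤ) + 1) → a k l = 0)
    (i : ℤ) (hi1 : 1 ≤ i) (hi2 : i ≤ (n : ℤ))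
    (Astar : ℤ → ℤ)
    (hAstar : ∀ l, Astar l = ∑ t ∈ Finset.Icc (l + 1) ((n : ℤ) + 1), (a i t - a (i + 1) (t + 1)))
    (ε : ℤ) (hub : ∀ l ∈ Finset.Icc i (n : ℤ), Astar l ≤ ε)
    (hmem : ∃ l ∈ Finset.Icc i (n : ℤ), Astar l = ε)
    (hεpos : 0 < ε)
    (lee : ℤ) (hle : lee ∈ Finset.Icc i (n : ℤ)) (hleval : Astar lee = ε)
    (hlemax : ∀ l ∈ Finset.Icc i (n : ℤ), Astar l = ε → l ≤ lee) :
    1 ≤ a i (lee + 1) ∧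
      ∀ k l : ℤ,
        0 ≤ (if k = i ∧ l = lee + 1 then a k l - 1
             else if k = i + 1 ∧ l = lee + 1 ∧ i < lee then a k l + 1
             else a k l) := by
  obtain rfl : Astar = starSum n a i := funext hAstar
  subst hleval
  have hlast : ∀ k ∈ Finset.Ioc lee (n : ℤ), starSum n a i k < starSum n a i lee := by
    intro k hk
    obtain ⟨hlt, hkn⟩ := Finset.mem_Ioc.mp hk
    have hk_mem : k ∈ Finset.Icc i (n : ℤ) :=
      Finset.mem_Icc.mpr ⟨(Finset.mem_Icc.mp hle).1.trans hlt.le, hkn⟩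
    exact (hub k hk_mem).lt_of_ne fun heq => hlt.not_ge (hlemax k hk_mem heq)
  have hentry : 1 ≤ a i (lee + 1) :=
    (hnn _ _).trans_lt (entry_lt_of_starSum_add_one_lt (starSum_add_one_lt_of_last_max hεpos hlast))
  exact ⟨hentry, starRaise_nonneg hnn hentry⟩
end

section
/- For every Lusztig datum a ∈ ℬ and every i ∈ I, both f̃_i a and f̃_i^* a have all entries nonnegative, i.e. they again lie in ℬ. Concretely: if k_f(a,i) < i then a_{k_f(a,i), i} ≥ 1, and if l_f(a,i) > i then a_{i+1, l_f(a,i)+1} ≥ 1. -/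
/-!
Consecutive partial sums differ by one summand. Moving one step past the extremal maximizer strictly
lowers the partial sum, so the summand just crossed, `a_{k_f+1,i+1} - a_{k_f,i}` for `f̃_i` and
`a_{i,l_f} - a_{i+1,l_f+1}` for `f̃_i^*`, is negative. As its first term is nonnegative, the
subtracted entry, which is the one that gets decremented, is positive.
-/

section ExtremalMaximizers

variable {ι M : Type*} [LinearOrder ι] [PartialOrder M] {s : Finset ι} {A : ι → M} {ε : M} {j k : ι}

theorem lt_of_last_maximizer_lt (hub : ∀ j ∈ s, A j ≤ ε) (hlast : ∀ j ∈ s, A j = ε → j ≤ k)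
    (hj : j ∈ s) (hkj : k < j) : A j < ε :=
  (hub j hj).lt_of_ne fun hjε => (hlast j hj hjε).not_gt hkj

theorem lt_of_lt_first_maximizer (hub : ∀ j ∈ s, A j ≤ ε) (hfirst : ∀ j ∈ s, A j = ε → k ≤ j)
    (hj : j ∈ s) (hjk : j < k) : A j < ε :=
  lt_of_last_maximizer_lt (ι := ιᵒᵈ) hub hfirst hj hjk

end ExtremalMaximizers

section PartialSums

variable {ι G : Type*} [LinearOrder ι] [LocallyFiniteOrder ι] [One ι] [Add ι] [SuccAddOrder ι]
  [NoMaxOrder ι] [AddCommGroup G] [PartialOrder G] [IsOrderedAddMonoid G] {l r : ι}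

theorem sum_Icc_add_one_right_lt_sum_Icc_iff (hlr : l ≤ r + 1) (f : ι → G) :
    ∑ x ∈ Finset.Icc l (r + 1), f x < ∑ x ∈ Finset.Icc l r, f x ↔ f (r + 1) < 0 := by
  rw [← Finset.sum_Ico_add_eq_sum_Icc hlr, Finset.Ico_add_one_right_eq_Icc, add_lt_iff_neg_left]

theorem sum_Icc_lt_sum_Icc_add_one_left_iff (hlr : l ≤ r) (f : ι → G) :
    ∑ x ∈ Finset.Icc l r, f x < ∑ x ∈ Finset.Icc (l + 1) r, f x ↔ f l < 0 := by
  rw [← Finset.add_sum_Ioc_eq_sum_Icc hlr, Finset.Icc_add_one_left_eq_Ioc, add_lt_iff_neg_right]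

end PartialSums

section DifferenceSums

variable {G : Type*} [AddCommGroup G] [PartialOrder G] [IsOrderedAddMonoid G]
  {p q A : ℤ → G} {ε : G} {m i N k l : ℤ}

theorem pos_of_last_maximizer_sum_Icc_sub (hp : 0 ≤ p (k + 1))
    (hA : ∀ k, A k = ∑ s ∈ Finset.Icc m k, (p s - q (s - 1)))
    (hub : ∀ j ∈ Finset.Icc m i, A j ≤ ε) (hk : m ≤ k) (hki : k < i) (hkε : A k = ε)
    (hlast : ∀ j ∈ Finset.Icc m i, A j = ε → j ≤ k) : 0 < q k := by
  have hsucc : k + 1 ∈ Finset.Icc m i := Finset.mem_Icc.2 ⟨by lia, hki⟩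
  have hdrop : A (k + 1) < A k :=
    hkε ▸ lt_of_last_maximizer_lt hub hlast hsucc (lt_add_one k)
  have hcrossed : p (k + 1) - q k < 0 := by
    rwa [hA, hA, sum_Icc_add_one_right_lt_sum_Icc_iff (by lia), add_sub_cancel_right] at hdrop
  exact hp.trans_lt (sub_neg.1 hcrossed)

theorem pos_of_first_maximizer_sum_Icc_sub (hp : 0 ≤ p l)
    (hA : ∀ l, A l = ∑ t ∈ Finset.Icc (l + 1) (N + 1), (p t - q (t + 1)))
    (hub : ∀ j ∈ Finset.Icc i N, A j ≤ ε) (hl : l ≤ N) (hil : i < l) (hlε : A l = ε)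
    (hfirst : ∀ j ∈ Finset.Icc i N, A j = ε → l ≤ j) : 0 < q (l + 1) := by
  have hpred : l - 1 ∈ Finset.Icc i N := Finset.mem_Icc.2 (by lia)
  have hdrop : A (l - 1) < A l :=
    hlε ▸ lt_of_lt_first_maximizer hub hfirst hpred (sub_one_lt l)
  have hcrossed : p l - q (l + 1) < 0 := by
    rwa [hA, hA, sub_add_cancel, sum_Icc_lt_sum_Icc_add_one_left_iff (by lia)] at hdrop
  exact hp.trans_lt (sub_neg.1 hcrossed)

end DifferenceSums

/-- For every Lusztig datum `a` and `i ∈ [1,n]`, both `f̃_i a` and `f̃_i^* a`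
have all entries nonnegative.  Concretely: if `k_f < i` then `a_{k_f,i} ≥ 1`, and if
`l_f > i` then `a_{i+1, l_f+1} ≥ 1`.  Here `f̃_i` decreases `a_{k_f,i}` by 1 (discarded if
`k_f = i`) and increases `a_{k_f,i+1}` by 1; `f̃_i^*` increases `a_{i,l_f+1}` by 1 and
decreases `a_{i+1,l_f+1}` by 1 (discarded if `l_f = i`). -/
theorem stmt2 (n : ℕ) (hn : 1 ≤ n) (a : ℤ → ℤ → ℤ)
    (hnn : ∀ k l : ℤ, 0 ≤ a k l)
    (hsupp : ∀ k l : ℤ, ¬(1 ≤ k ∧ k < l ∧ l ≤ (n : ℤ) + 1) → a k l = 0)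
    (i : ℤ) (hi1 : 1 ≤ i) (hi2 : i ≤ (n : ℤ))
    (A : ℤ → ℤ) (hA : ∀ k, A k = ∑ s ∈ Finset.Icc 1 k, (a s (i + 1) - a (s - 1) i))
    (ε : ℤ) (hub : ∀ k ∈ Finset.Icc 1 i, A k ≤ ε)
    (hmem : ∃ k ∈ Finset.Icc 1 i, A k = ε)
    (Astar : ℤ → ℤ)
    (hAstar : ∀ l, Astar l = ∑ t ∈ Finset.Icc (l + 1) ((n : ℤ) + 1), (a i t - a (i + 1) (t + 1)))
    (εs : ℤ) (hubs : ∀ l ∈ Finset.Icc i (n : ℤ), Astar l ≤ εs)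
    (hmems : ∃ l ∈ Finset.Icc i (n : ℤ), Astar l = εs)
    (kf : ℤ) (hkf : kf ∈ Finset.Icc 1 i) (hkfval : A kf = ε)
    (hkfmax : ∀ k ∈ Finset.Icc 1 i, A k = ε → k ≤ kf)
    (lf : ℤ) (hlf : lf ∈ Finset.Icc i (n : ℤ)) (hlfval : Astar lf = εs)
    (hlfmin : ∀ l ∈ Finset.Icc i (n : ℤ), Astar l = εs → lf ≤ l) :
    (kf < i → 1 ≤ a kf i) ∧
    (i < lf → 1 ≤ a (i + 1) (lf + 1)) ∧
    (∀ k l : ℤ,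
      0 ≤ (if k = kf ∧ l = i ∧ kf < i then a k l - 1
           else if k = kf ∧ l = i + 1 then a k l + 1
           else a k l)) ∧
    (∀ k l : ℤ,
      0 ≤ (if k = i ∧ l = lf + 1 then a k l + 1
           else if k = i + 1 ∧ l = lf + 1 ∧ i < lf then a k l - 1
           else a k l)) := by
  have hkf_pos : kf < i → 1 ≤ a kf i := fun hlt =>
    pos_of_last_maximizer_sum_Icc_sub (p := (a · (i + 1))) (q := (a · i)) (hnn _ _) hA hub
      (Finset.mem_Icc.1 hkf).1 hlt hkfval hkfmax
  have hlf_pos : i < lf → 1 ≤ a (i + 1) (lf + 1) := fun hlt =>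
    pos_of_first_maximizer_sum_Icc_sub (p := a i) (q := a (i + 1)) (hnn _ _) hAstar hubs
      (Finset.mem_Icc.1 hlf).2 hlt hlfval hlfmin
  refine ⟨hkf_pos, hlf_pos, fun k l => ?_, fun k l => ?_⟩
  · split_ifs with hdec
    · obtain ⟨rfl, rfl, hlt⟩ := hdec
      exact sub_nonneg.2 (hkf_pos hlt)
    · exact add_nonneg (hnn k l) zero_le_one
    · exact hnn k l
  · split_ifs with hinc hdec
    · exact add_nonneg (hnn k l) zero_le_one
    · obtain ⟨rfl, rfl, hlt⟩ := hdec
      exact sub_nonneg.2 (hlf_pos hlt)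
    · exact hnn k l
end

section
/- The data (ℬ, wt, ε_i, φ_i, ẽ_i, f̃_i) form a crystal. Concretely, for every a ∈ ℬ and i ∈ I: (i) m_i(f̃_i a) = m_i(a) + 1 and m_j(f̃_i a) = m_j(a) for j ≠ i (i.e. wt(f̃_i a) = wt(a) − α_i), ε_i(f̃_i a) = ε_i(a) + 1, and ẽ_i(f̃_i a) = a; (ii) if ε_i(a) > 0 then m_i(ẽ_i a) = m_i(a) − 1 and m_j(ẽ_i a) = m_j(a) for j ≠ i (i.e. wt(ẽ_i a) = wt(a) + α_i), ε_i(ẽ_i a) = ε_i(a) − 1, and f̃_i(ẽ_i a) = a. -/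
namespace Stmt3

/-- `A_k^{(i)}(a) = Σ_{s=1}^{k} (a_{s,i+1} − a_{s−1,i})`. -/
noncomputable def A (a : ℤ → ℤ → ℤ) (i k : ℤ) : ℤ :=
  ∑ s ∈ Finset.Icc 1 k, (a s (i + 1) - a (s - 1) i)

/-- `ε_i(a) = max{A_1^{(i)}(a),…,A_i^{(i)}(a)}`. -/
noncomputable def eps (a : ℤ → ℤ → ℤ) (i : ℤ) : ℤ :=
  ((Finset.Icc 1 i).image (A a i)).max.unbotD 0

/-- `k_e(a,i)`: the minimal `k ∈ [1,i]` with `A_k^{(i)}(a) = ε_i(a)`. -/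
noncomputable def ke (a : ℤ → ℤ → ℤ) (i : ℤ) : ℤ :=
  (((Finset.Icc 1 i).filter fun k => A a i k = eps a i).min).untopD 0

/-- `k_f(a,i)`: the maximal `k ∈ [1,i]` with `A_k^{(i)}(a) = ε_i(a)`. -/
noncomputable def kf (a : ℤ → ℤ → ℤ) (i : ℤ) : ℤ :=
  (((Finset.Icc 1 i).filter fun k => A a i k = eps a i).max).unbotD 0

/-- The lowering operator `f̃_i`: decrease `a_{k_f,i}` by 1 (discarded when `k_f = i`, the
entry being out of range) and increase `a_{k_f,i+1}` by 1. -/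
noncomputable def ftil (a : ℤ → ℤ → ℤ) (i : ℤ) : ℤ → ℤ → ℤ := fun k l =>
  if k = kf a i ∧ l = i ∧ kf a i < i then a k l - 1
  else if k = kf a i ∧ l = i + 1 then a k l + 1
  else a k l

/-- The raising operator `ẽ_i` (for `ε_i(a) > 0`): increase `a_{k_e,i}` by 1 (discarded when
`k_e = i`) and decrease `a_{k_e,i+1}` by 1. -/
noncomputable def etil (a : ℤ → ℤ → ℤ) (i : ℤ) : ℤ → ℤ → ℤ := fun k l =>
  if k = ke a i ∧ l = i ∧ ke a i < i then a k l + 1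
  else if k = ke a i ∧ l = i + 1 then a k l - 1
  else a k l

/-- `m_i(a) = Σ_{k=1}^{i} Σ_{l=i+1}^{n+1} a_{k,l}`; the weight of `a` is `(−m_i(a))_i`. -/
noncomputable def m (n : ℕ) (a : ℤ → ℤ → ℤ) (j : ℤ) : ℤ :=
  ∑ k ∈ Finset.Icc 1 j, ∑ l ∈ Finset.Icc (j + 1) ((n : ℤ) + 1), a k l

/-!
Write `f̃_i a = a + δ_p` with `p = k_f(a)` and `ẽ_i a = a - δ_q` with `q = k_e(a)`, where `δ_p` is
the elementary array `transfer i p`. Adding `δ_p` changes the sequence `A_1, …, A_i` by `0` before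
`p`, by `1` at `p` and by `2` after `p`. As the `A_k` are integers, `p` is therefore the last
maximizer of the old sequence exactly when it is the first maximizer of the new one. Hence
`k_e(f̃_i a) = k_f(a)` and `k_f(ẽ_i a) = k_e(a)`, so `ẽ_i` and `f̃_i` are mutually inverse, and the
claims on `ẽ_i a` are those on `f̃_i` at the datum `ẽ_i a`.
-/

section Maximizers

variable {ι α : Type*} [LinearOrder ι] [PartialOrder α] {F : ι → α} {s : Set ι} {p q : ι} {M : α}

/-- `p` is the smallest point of `s` at which `F` attains its maximum over `s`; this is the
property that characterizes `k_e`. -/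
def IsFirstMaxOn (F : ι → α) (s : Set ι) (p : ι) : Prop :=
  p ∈ s ∧ ∀ k ∈ s, F k ≤ F p ∧ (k < p → F k < F p)

/-- `p` is the largest point of `s` at which `F` attains its maximum over `s`; this is the
property that characterizes `k_f`. -/
def IsLastMaxOn (F : ι → α) (s : Set ι) (p : ι) : Prop :=
  p ∈ s ∧ ∀ k ∈ s, F k ≤ F p ∧ (p < k → F k < F p)

lemma IsFirstMaxOn.unique (hp : IsFirstMaxOn F s p) (hq : IsFirstMaxOn F s q) : p = q :=
  le_antisymm (not_lt.1 fun h => ((hp.2 q hq.1).2 h).not_ge (hq.2 p hp.1).1)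
    (not_lt.1 fun h => ((hq.2 p hp.1).2 h).not_ge (hp.2 q hq.1).1)

lemma IsLastMaxOn.unique (hp : IsLastMaxOn F s p) (hq : IsLastMaxOn F s q) : p = q :=
  le_antisymm (not_lt.1 fun h => ((hq.2 p hp.1).2 h).not_ge (hp.2 q hq.1).1)
    (not_lt.1 fun h => ((hp.2 q hq.1).2 h).not_ge (hq.2 p hp.1).1)

lemma isFirstMaxOn_of_isLeast (hM : M ∈ upperBounds (F '' s))
    (hp : IsLeast {k ∈ s | F k = M} p) : IsFirstMaxOn F s p := by
  obtain ⟨⟨hps, rfl⟩, hmin⟩ := hp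
  have hle : ∀ k ∈ s, F k ≤ F p := fun k hk => hM ⟨k, hk, rfl⟩
  exact ⟨hps, fun k hk => ⟨hle k hk, fun hkp =>
    (hle k hk).lt_of_ne fun heq => (hmin ⟨hk, heq⟩).not_gt hkp⟩⟩

lemma isLastMaxOn_of_isGreatest (hM : M ∈ upperBounds (F '' s))
    (hp : IsGreatest {k ∈ s | F k = M} p) : IsLastMaxOn F s p := by
  obtain ⟨⟨hps, rfl⟩, hmax⟩ := hp
  have hle : ∀ k ∈ s, F k ≤ F p := fun k hk => hM ⟨k, hk, rfl⟩
  exact ⟨hps, fun k hk => ⟨hle k hk, fun hpk =>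
    (hle k hk).lt_of_ne fun heq => (hmax ⟨hk, heq⟩).not_gt hpk⟩⟩

lemma isFirstMaxOn_iff_isLastMaxOn_of_eq_add {F G : ι → ℤ}
    (hG : ∀ k ∈ s, G k = F k + ((if p ≤ k then 1 else 0) + if p < k then 1 else 0)) :
    IsFirstMaxOn G s p ↔ IsLastMaxOn F s p := by
  refine and_congr_right fun hp => forall₂_congr fun k hk => ?_
  have hGp : G p = F p + 1 := by simpa using hG p hp
  have hGk := hG k hk
  rcases lt_trichotomy k p with hkp | rfl | hpk
  · simp only [hkp.not_ge, hkp.not_gt, if_false] at hGk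
    simp only [hkp, hkp.not_gt, true_imp_iff, false_imp_iff, and_true]
    lia
  · simp
  · simp only [hpk.le, hpk, if_true] at hGk
    simp only [hpk, hpk.not_gt, true_imp_iff, false_imp_iff, and_true]
    lia

lemma isGreatest_unbotD_max {α : Type*} [LinearOrder α] {s : Finset α} (hs : s.Nonempty)
    (d : α) : IsGreatest (s : Set α) (s.max.unbotD d) := by
  rw [← Finset.coe_max' hs, WithBot.unbotD_coe]
  exact s.isGreatest_max' hs

lemma isLeast_untopD_min {α : Type*} [LinearOrder α] {s : Finset α} (hs : s.Nonempty)
    (d : α) : IsLeast (s : Set α) (s.min.untopD d) := by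
  rw [← Finset.coe_min' hs, WithTop.untopD_coe]
  exact s.isLeast_min' hs

end Maximizers

section Extremizers

variable (a : ℤ → ℤ → ℤ) {i : ℤ}

lemma isGreatest_eps (hi : 1 ≤ i) : IsGreatest (A a i '' Set.Icc 1 i) (eps a i) := by
  simpa only [eps, Finset.coe_image, Finset.coe_Icc] using
    isGreatest_unbotD_max ((Finset.nonempty_Icc.2 hi).image (A a i)) 0

lemma nonempty_filter_A_eq_eps (hi : 1 ≤ i) :
    ((Finset.Icc 1 i).filter fun k => A a i k = eps a i).Nonempty := by
  obtain ⟨k, hk, hAk⟩ := (isGreatest_eps a hi).1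
  exact ⟨k, Finset.mem_filter.2 ⟨Finset.mem_Icc.2 hk, hAk⟩⟩

lemma isLeast_ke (hi : 1 ≤ i) :
    IsLeast {k ∈ Set.Icc 1 i | A a i k = eps a i} (ke a i) := by
  simpa only [ke, Finset.coe_filter, Finset.mem_Icc, Set.mem_Icc] using
    isLeast_untopD_min (nonempty_filter_A_eq_eps a hi) 0

lemma isGreatest_kf (hi : 1 ≤ i) :
    IsGreatest {k ∈ Set.Icc 1 i | A a i k = eps a i} (kf a i) := by
  simpa only [kf, Finset.coe_filter, Finset.mem_Icc, Set.mem_Icc] using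
    isGreatest_unbotD_max (nonempty_filter_A_eq_eps a hi) 0

lemma isFirstMaxOn_ke (hi : 1 ≤ i) : IsFirstMaxOn (A a i) (Set.Icc 1 i) (ke a i) :=
  isFirstMaxOn_of_isLeast (isGreatest_eps a hi).2 (isLeast_ke a hi)

lemma isLastMaxOn_kf (hi : 1 ≤ i) : IsLastMaxOn (A a i) (Set.Icc 1 i) (kf a i) :=
  isLastMaxOn_of_isGreatest (isGreatest_eps a hi).2 (isGreatest_kf a hi)

end Extremizers

/-- The elementary array with entry `1` at `(p, i + 1)` and `-1` at `(p, i)`, the latter being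
discarded unless `p < i`. Adding it is what `f̃_i` does, subtracting it is what `ẽ_i` does. -/
def transfer (i p : ℤ) : ℤ → ℤ → ℤ := fun k l =>
  if k = p then (if l = i + 1 then 1 else 0) - (if l = i ∧ p < i then 1 else 0) else 0

section Transfer

variable (a b : ℤ → ℤ → ℤ) {i p : ℤ}

lemma ftil_eq_add_transfer (i : ℤ) : ftil a i = a + transfer i (kf a i) := by
  funext k l
  simp only [ftil, transfer, Pi.add_apply]
  grind

lemma etil_eq_sub_transfer (i : ℤ) : etil a i = a - transfer i (ke a i) := by
  funext k l
  simp only [etil, transfer, Pi.sub_apply]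
  grind

lemma A_add (i k : ℤ) : A (a + b) i k = A a i k + A b i k := by
  simp only [A, Pi.add_apply, add_sub_add_comm, Finset.sum_add_distrib]

lemma m_add (n : ℕ) (j : ℤ) : m n (a + b) j = m n a j + m n b j := by
  simp only [m, Pi.add_apply, Finset.sum_add_distrib]

lemma A_transfer {k : ℤ} (hp : 1 ≤ p) (hk : k ≤ i) :
    A (transfer i p) i k = (if p ≤ k then 1 else 0) + if p < k then 1 else 0 := by
  have hterm : ∀ s ∈ Finset.Icc 1 k, transfer i p s (i + 1) - transfer i p (s - 1) i =
      (if s = p then 1 else 0) + if s = p + 1 then 1 else 0 := by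
    intro s hs
    rw [Finset.mem_Icc] at hs
    unfold transfer
    grind
  rw [A, Finset.sum_congr rfl hterm, Finset.sum_add_distrib, Finset.sum_ite_eq',
    Finset.sum_ite_eq']
  simp only [Finset.mem_Icc]
  grind

lemma m_transfer (n : ℕ) (hp : p ∈ Set.Icc 1 i) (hi : i ≤ n) (j : ℤ) :
    m n (transfer i p) j = if j = i then 1 else 0 := by
  obtain ⟨hp1, hpi⟩ := hp
  have hrow : ∀ k, ∑ l ∈ Finset.Icc (j + 1) ((n : ℤ) + 1), transfer i p k l =
      if k = p then (if j ≤ i then 1 else 0) - (if j < i ∧ p < i then 1 else 0) else 0 := by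
    intro k
    by_cases hk : k = p
    · simp only [transfer, hk, if_true, Finset.sum_sub_distrib, ite_and, Finset.sum_ite_eq',
        Finset.mem_Icc]
      grind
    · simp only [transfer, hk, if_false, Finset.sum_const_zero]
  simp only [m, hrow, Finset.sum_ite_eq', Finset.mem_Icc]
  grind

lemma isFirstMaxOn_A_add_transfer_iff (hp : 1 ≤ p) :
    IsFirstMaxOn (A (a + transfer i p) i) (Set.Icc 1 i) p ↔
      IsLastMaxOn (A a i) (Set.Icc 1 i) p :=
  isFirstMaxOn_iff_isLastMaxOn_of_eq_add fun k hk => by rw [A_add, A_transfer hp hk.2]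

end Transfer

section Crystal

variable (a : ℤ → ℤ → ℤ) {i : ℤ}

lemma ke_ftil (hi : 1 ≤ i) : ke (ftil a i) i = kf a i := by
  have hkf := isLastMaxOn_kf a hi
  refine (isFirstMaxOn_ke (ftil a i) hi).unique ?_
  rw [ftil_eq_add_transfer]
  exact (isFirstMaxOn_A_add_transfer_iff a hkf.1.1).2 hkf

lemma kf_etil (hi : 1 ≤ i) : kf (etil a i) i = ke a i := by
  have hke := isFirstMaxOn_ke a hi
  refine (isLastMaxOn_kf (etil a i) hi).unique
    ((isFirstMaxOn_A_add_transfer_iff (etil a i) hke.1.1).1 ?_)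
  rwa [etil_eq_sub_transfer, sub_add_cancel]

lemma etil_ftil (hi : 1 ≤ i) : etil (ftil a i) i = a := by
  rw [etil_eq_sub_transfer, ke_ftil a hi, ftil_eq_add_transfer, add_sub_cancel_right]

lemma ftil_etil (hi : 1 ≤ i) : ftil (etil a i) i = a := by
  rw [ftil_eq_add_transfer, kf_etil a hi, etil_eq_sub_transfer, sub_add_cancel]

lemma eps_ftil (hi : 1 ≤ i) : eps (ftil a i) i = eps a i + 1 := by
  obtain ⟨⟨hkf1, hkfi⟩, hAkf⟩ := (isGreatest_kf a hi).1
  calc eps (ftil a i) i = A (ftil a i) i (kf a i) := by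
        rw [← ke_ftil a hi, (isLeast_ke (ftil a i) hi).1.2]
    _ = A a i (kf a i) + A (transfer i (kf a i)) i (kf a i) := by
        rw [ftil_eq_add_transfer, A_add]
    _ = eps a i + 1 := by simp [hAkf, A_transfer hkf1 hkfi]

lemma eps_etil (hi : 1 ≤ i) : eps (etil a i) i = eps a i - 1 := by
  have h := eps_ftil (etil a i) hi
  rw [ftil_etil a hi] at h
  exact eq_sub_of_add_eq h.symm

lemma m_ftil (n : ℕ) (hi : 1 ≤ i) (hin : i ≤ n) (j : ℤ) :
    m n (ftil a i) j = m n a j + if j = i then 1 else 0 := by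
  rw [ftil_eq_add_transfer, m_add, m_transfer n (isGreatest_kf a hi).1.1 hin]

lemma m_etil (n : ℕ) (hi : 1 ≤ i) (hin : i ≤ n) (j : ℤ) :
    m n (etil a i) j = m n a j - if j = i then 1 else 0 := by
  have h := m_ftil (etil a i) n hi hin j
  rw [ftil_etil a hi] at h
  exact eq_sub_of_add_eq h.symm

end Crystal

theorem stmt3_general (n : ℕ) (a : ℤ → ℤ → ℤ) (i : ℤ) (hi1 : 1 ≤ i) (hi2 : i ≤ (n : ℤ)) :
    (m n (ftil a i) i = m n a i + 1 ∧
      (∀ j : ℤ, j ≠ i → m n (ftil a i) j = m n a j) ∧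
      eps (ftil a i) i = eps a i + 1 ∧
      etil (ftil a i) i = a) ∧
    (m n (etil a i) i = m n a i - 1 ∧
      (∀ j : ℤ, j ≠ i → m n (etil a i) j = m n a j) ∧
      eps (etil a i) i = eps a i - 1 ∧
      ftil (etil a i) i = a) := by
  refine ⟨⟨?_, fun j hj => ?_, eps_ftil a hi1, etil_ftil a hi1⟩,
    ?_, fun j hj => ?_, eps_etil a hi1, ftil_etil a hi1⟩
  · rw [m_ftil a n hi1 hi2, if_pos rfl]
  · rw [m_ftil a n hi1 hi2, if_neg hj, add_zero]
  · rw [m_etil a n hi1 hi2, if_pos rfl]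
  · rw [m_etil a n hi1 hi2, if_neg hj, sub_zero]

/-- `(ℬ, wt, ε_i, φ_i, ẽ_i, f̃_i)` is a crystal: for every Lusztig datum `a`
and `i ∈ [1,n]`, (i) `wt(f̃_i a) = wt(a) − α_i`, `ε_i(f̃_i a) = ε_i(a) + 1`, and
`ẽ_i (f̃_i a) = a`; (ii) if `ε_i(a) > 0` then `wt(ẽ_i a) = wt(a) + α_i`,
`ε_i(ẽ_i a) = ε_i(a) − 1`, and `f̃_i (ẽ_i a) = a`. -/
theorem stmt3 (n : ℕ) (hn : 1 ≤ n) (a : ℤ → ℤ → ℤ)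
    (hnn : ∀ k l : ℤ, 0 ≤ a k l)
    (hsupp : ∀ k l : ℤ, ¬(1 ≤ k ∧ k < l ∧ l ≤ (n : ℤ) + 1) → a k l = 0)
    (i : ℤ) (hi1 : 1 ≤ i) (hi2 : i ≤ (n : ℤ)) :
    (m n (ftil a i) i = m n a i + 1 ∧
      (∀ j : ℤ, 1 ≤ j → j ≤ (n : ℤ) → j ≠ i → m n (ftil a i) j = m n a j) ∧
      eps (ftil a i) i = eps a i + 1 ∧
      etil (ftil a i) i = a) ∧
    (0 < eps a i →
      m n (etil a i) i = m n a i - 1 ∧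
      (∀ j : ℤ, 1 ≤ j → j ≤ (n : ℤ) → j ≠ i → m n (etil a i) j = m n a j) ∧
      eps (etil a i) i = eps a i - 1 ∧
      ftil (etil a i) i = a) := by
  obtain ⟨⟨hf, hfj, hfrest⟩, he, hej, herest⟩ := stmt3_general n a i hi1 hi2
  exact ⟨⟨hf, fun j _ _ => hfj j, hfrest⟩, fun _ => ⟨he, fun j _ _ => hej j, herest⟩⟩

end Stmt3
end

section
/- The data (ℬ, wt, ε_i^*, φ_i^*, ẽ_i^*, f̃_i^*) form a crystal. Concretely, for every a ∈ ℬ and i ∈ I: (i) m_i(f̃_i^* a) = m_i(a) + 1 and m_j(f̃_i^* a) = m_j(a) for j ≠ i (i.e. wt(f̃_i^* a) = wt(a) − α_i), ε_i^*(f̃_i^* a) = ε_i^*(a) + 1, and ẽ_i^*(f̃_i^* a) = a; (ii) if ε_i^*(a) > 0 then m_i(ẽ_i^* a) = m_i(a) − 1 and m_j(ẽ_i^* a) = m_j(a) for j ≠ i (i.e. wt(ẽ_i^* a) = wt(a) + α_i), ε_i^*(ẽ_i^* a) = ε_i^*(a) − 1, and f̃_i^*(ẽ_i^* a) = a. -/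
namespace Stmt4

/-- `A_l^{*(i)}(a) = Σ_{t=l+1}^{n+1} (a_{i,t} − a_{i+1,t+1})`. -/
noncomputable def Astar (n : ℕ) (a : ℤ → ℤ → ℤ) (i l : ℤ) : ℤ :=
  ∑ t ∈ Finset.Icc (l + 1) ((n : ℤ) + 1), (a i t - a (i + 1) (t + 1))

/-- `ε_i^*(a) = max{A_i^{*(i)}(a),…,A_n^{*(i)}(a)}`. -/
noncomputable def epsStar (n : ℕ) (a : ℤ → ℤ → ℤ) (i : ℤ) : ℤ :=
  ((Finset.Icc i (n : ℤ)).image (Astar n a i)).max.unbotD 0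

/-- `l_e(a,i)`: the maximal `l ∈ [i,n]` with `A_l^{*(i)}(a) = ε_i^*(a)`. -/
noncomputable def leStar (n : ℕ) (a : ℤ → ℤ → ℤ) (i : ℤ) : ℤ :=
  (((Finset.Icc i (n : ℤ)).filter fun l => Astar n a i l = epsStar n a i).max).unbotD 0

/-- `l_f(a,i)`: the minimal `l ∈ [i,n]` with `A_l^{*(i)}(a) = ε_i^*(a)`. -/
noncomputable def lfStar (n : ℕ) (a : ℤ → ℤ → ℤ) (i : ℤ) : ℤ :=
  (((Finset.Icc i (n : ℤ)).filter fun l => Astar n a i l = epsStar n a i).min).untopD 0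

/-- The lowering operator `f̃_i^*`: increase `a_{i,l_f+1}` by 1 and decrease
`a_{i+1,l_f+1}` by 1 (discarded when `l_f = i`, the entry `(i+1,i+1)` being out of range). -/
noncomputable def ftilStar (n : ℕ) (a : ℤ → ℤ → ℤ) (i : ℤ) : ℤ → ℤ → ℤ := fun k l =>
  if k = i ∧ l = lfStar n a i + 1 then a k l + 1
  else if k = i + 1 ∧ l = lfStar n a i + 1 ∧ i < lfStar n a i then a k l - 1
  else a k l

/-- The raising operator `ẽ_i^*` (for `ε_i^*(a) > 0`): decrease `a_{i,l_e+1}` by 1 and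
increase `a_{i+1,l_e+1}` by 1 (discarded when `l_e = i`). -/
noncomputable def etilStar (n : ℕ) (a : ℤ → ℤ → ℤ) (i : ℤ) : ℤ → ℤ → ℤ := fun k l =>
  if k = i ∧ l = leStar n a i + 1 then a k l - 1
  else if k = i + 1 ∧ l = leStar n a i + 1 ∧ i < leStar n a i then a k l + 1
  else a k l

/-- `m_i(a) = Σ_{k=1}^{i} Σ_{l=i+1}^{n+1} a_{k,l}`; the weight of `a` is `(−m_i(a))_i`. -/
noncomputable def m (n : ℕ) (a : ℤ → ℤ → ℤ) (j : ℤ) : ℤ :=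
  ∑ k ∈ Finset.Icc 1 j, ∑ l ∈ Finset.Icc (j + 1) ((n : ℤ) + 1), a k l

/-!
Write `step i p` for the array with entry `1` at `(i, p + 1)` and, when `i < p`, entry `-1` at
`(i + 1, p + 1)`. Then `f̃_i^* a = a + step i l_f` and `ẽ_i^* a = a - step i l_e`. Adding `step i p`
changes `l ↦ A_l^{*(i)}` by `2` on `l < p`, by `1` at `l = p` and not at all on `l > p`. Since the
values are integers, `p` is therefore the first place where the old function is maximal if and only
if it is the last place where the new one is. So `l_e(f̃_i^* a) = l_f(a)` and
`l_f(ẽ_i^* a) = l_e(a)`, which makes the two operators mutually inverse, and every statement about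
`ẽ_i^* a` is the corresponding statement about `f̃_i^*` applied to `ẽ_i^* a`.
-/

section Argmax

variable {α β : Type*} [LinearOrder α] [LinearOrder β]

theorem isGreatest_unbotD_max {s : Finset α} (hs : s.Nonempty) (d : α) :
    IsGreatest (s : Set α) (s.max.unbotD d) := by
  rw [← Finset.coe_max' hs, WithBot.unbotD_coe]
  exact s.isGreatest_max' hs

theorem isLeast_untopD_min {s : Finset α} (hs : s.Nonempty) (d : α) :
    IsLeast (s : Set α) (s.min.untopD d) := by
  rw [← Finset.coe_min' hs, WithTop.untopD_coe]
  exact s.isLeast_min' hs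

/-- The set of points of `s` at which `A` attains its maximum over `s`. The index `l_f` is its
least element and `l_e` its greatest, for `A = A^{*(i)}` and `s = [i, n]`. -/
def argmaxOn (A : α → β) (s : Set α) : Set α :=
  {l ∈ s | IsMaxOn A s l}

theorem isLeast_argmaxOn_iff {A : α → β} {s : Set α} {p : α} :
    IsLeast (argmaxOn A s) p ↔
      p ∈ s ∧ (∀ l ∈ s, l < p → A l < A p) ∧ ∀ l ∈ s, p < l → A l ≤ A p := by
  constructor
  · rintro ⟨⟨hps, hmax⟩, hleast⟩
    refine ⟨hps, fun l hl hlp => ?_, fun l hl _ => hmax hl⟩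
    by_contra! hpl
    exact hlp.not_ge (hleast ⟨hl, fun k hk => (hmax hk).trans hpl⟩)
  · rintro ⟨hps, hbefore, hafter⟩
    refine ⟨⟨hps, fun l hl => ?_⟩, fun l hl => ?_⟩
    · rcases lt_trichotomy l p with hlp | rfl | hpl
      exacts [(hbefore l hl hlp).le, le_rfl, hafter l hl hpl]
    · by_contra! hlp
      exact (hbefore l hl.1 hlp).not_ge (hl.2 hps)

theorem isGreatest_argmaxOn_iff {A : α → β} {s : Set α} {p : α} :
    IsGreatest (argmaxOn A s) p ↔
      p ∈ s ∧ (∀ l ∈ s, p < l → A l < A p) ∧ ∀ l ∈ s, l < p → A l ≤ A p :=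
  isLeast_argmaxOn_iff (α := αᵒᵈ)

theorem isGreatest_argmaxOn_iff_isLeast_argmaxOn {A B : α → ℤ} {s : Set α} {p : α}
    (hB : ∀ l ∈ s, B l = A l + ((if l ≤ p then 1 else 0) + if l < p then 1 else 0)) :
    IsGreatest (argmaxOn B s) p ↔ IsLeast (argmaxOn A s) p := by
  rw [isGreatest_argmaxOn_iff, isLeast_argmaxOn_iff]
  refine and_congr_right fun hps => ?_
  have hBp : B p = A p + 1 := by simp [hB p hps]
  have hbefore {l} (hl : l ∈ s) (hlp : l < p) : B l = A l + 2 := by simp [hB l hl, hlp, hlp.le]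
  have hafter {l} (hl : l ∈ s) (hpl : p < l) : B l = A l := by
    simp [hB l hl, hpl.not_ge, hpl.not_gt]
  rw [and_comm]
  refine and_congr ?_ ?_ <;> refine forall₃_congr fun l hl h => ?_
  · rw [hbefore hl h, hBp]
    omega
  · rw [hafter hl h, hBp]
    omega

end Argmax

section ExtremalIndices

variable {n : ℕ} {i : ℤ} (a : ℤ → ℤ → ℤ)

theorem isGreatest_epsStar (hi : i ≤ n) :
    IsGreatest (Astar n a i '' Set.Icc i n) (epsStar n a i) := by
  rw [← Finset.coe_Icc, ← Finset.coe_image]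
  exact isGreatest_unbotD_max ((Finset.nonempty_Icc.2 hi).image _) 0

theorem argmaxOn_Astar (hi : i ≤ n) :
    argmaxOn (Astar n a i) (Set.Icc i n) =
      ((Finset.Icc i (n : ℤ)).filter fun l => Astar n a i l = epsStar n a i : Finset ℤ) := by
  ext l
  rw [Finset.mem_coe, Finset.mem_filter, Finset.mem_Icc]
  refine and_congr_right fun hl => ⟨fun hmax => ?_, fun heq k hk => ?_⟩
  · exact IsGreatest.unique ⟨Set.mem_image_of_mem _ hl, Set.forall_mem_image.2 fun _ hk => hmax hk⟩
      (isGreatest_epsStar a hi)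
  · exact ((isGreatest_epsStar a hi).2 (Set.mem_image_of_mem _ hk)).trans_eq heq.symm

theorem Astar_eq_epsStar {l : ℤ} (hi : i ≤ n)
    (hl : l ∈ argmaxOn (Astar n a i) (Set.Icc i n)) : Astar n a i l = epsStar n a i := by
  rw [argmaxOn_Astar a hi] at hl
  exact (Finset.mem_filter.1 hl).2

theorem nonempty_filter_Astar_eq_epsStar (hi : i ≤ n) :
    ((Finset.Icc i (n : ℤ)).filter fun l => Astar n a i l = epsStar n a i).Nonempty := by
  obtain ⟨l, hl, heq⟩ := (isGreatest_epsStar a hi).1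
  exact ⟨l, Finset.mem_filter.2 ⟨Finset.mem_Icc.2 hl, heq⟩⟩

theorem isGreatest_leStar (hi : i ≤ n) :
    IsGreatest (argmaxOn (Astar n a i) (Set.Icc i n)) (leStar n a i) := by
  rw [argmaxOn_Astar a hi]
  exact isGreatest_unbotD_max (nonempty_filter_Astar_eq_epsStar a hi) 0

theorem isLeast_lfStar (hi : i ≤ n) :
    IsLeast (argmaxOn (Astar n a i) (Set.Icc i n)) (lfStar n a i) := by
  rw [argmaxOn_Astar a hi]
  exact isLeast_untopD_min (nonempty_filter_Astar_eq_epsStar a hi) 0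

end ExtremalIndices

section Step

/-- The array added by `f̃_i^*` at `l_f = p` and subtracted by `ẽ_i^*` at `l_e = p`. Its second
entry is absent for `p ≤ i`, where the position `(i + 1, p + 1)` is not in `Π`. -/
def step (i p : ℤ) : ℤ → ℤ → ℤ := fun k l =>
  (if k = i ∧ l = p + 1 then 1 else 0) - if k = i + 1 ∧ l = p + 1 ∧ i < p then 1 else 0

theorem ftilStar_eq_add_step (n : ℕ) (a : ℤ → ℤ → ℤ) (i : ℤ) :
    ftilStar n a i = a + step i (lfStar n a i) := by
  funext k l
  simp only [ftilStar, step, Pi.add_apply]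
  split_ifs <;> omega

theorem etilStar_eq_sub_step (n : ℕ) (a : ℤ → ℤ → ℤ) (i : ℤ) :
    etilStar n a i = a - step i (leStar n a i) := by
  funext k l
  simp only [etilStar, step, Pi.sub_apply]
  split_ifs <;> omega

theorem Astar_add (n : ℕ) (a b : ℤ → ℤ → ℤ) (i l : ℤ) :
    Astar n (a + b) i l = Astar n a i l + Astar n b i l := by
  simp only [Astar, Pi.add_apply, add_sub_add_comm, Finset.sum_add_distrib]

theorem m_add (n : ℕ) (a b : ℤ → ℤ → ℤ) : m n (a + b) = m n a + m n b := by
  funext j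
  simp only [m, Pi.add_apply, Finset.sum_add_distrib]

variable {n : ℕ} {i p : ℤ}

theorem Astar_step {l : ℤ} (hl : i ≤ l) (hp : p ≤ n) :
    Astar n (step i p) i l = (if l ≤ p then 1 else 0) + if l < p then 1 else 0 := by
  have hterm (t : ℤ) : step i p i t - step i p (i + 1) (t + 1) =
      (if t = p + 1 then 1 else 0) + if t = p then if i < p then 1 else 0 else 0 := by
    simp only [step]
    grind
  simp only [Astar, hterm, Finset.sum_add_distrib, Finset.sum_ite_eq', Finset.mem_Icc]
  split_ifs <;> omega

theorem m_step (hi : 1 ≤ i) (hip : i ≤ p) (hp : p ≤ n) : m n (step i p) = Pi.single i 1 := by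
  funext j
  simp only [m, step, ite_and, Finset.sum_sub_distrib, Finset.sum_ite_irrel, Finset.sum_ite_eq',
    Finset.sum_const_zero, Finset.mem_Icc, Pi.single_apply]
  split_ifs <;> omega

theorem isGreatest_argmaxOn_Astar_add_step_iff (a : ℤ → ℤ → ℤ) (hp : p ≤ n) :
    IsGreatest (argmaxOn (Astar n (a + step i p) i) (Set.Icc i n)) p ↔
      IsLeast (argmaxOn (Astar n a i) (Set.Icc i n)) p :=
  isGreatest_argmaxOn_iff_isLeast_argmaxOn fun l hl => by rw [Astar_add, Astar_step hl.1 hp]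

end Step

section Crystal

variable {n : ℕ} {i : ℤ} (a : ℤ → ℤ → ℤ)

theorem lfStar_mem_Icc (hi : i ≤ n) : lfStar n a i ∈ Set.Icc i (n : ℤ) :=
  (isLeast_lfStar a hi).1.1

theorem isGreatest_argmaxOn_ftilStar (hi : i ≤ n) :
    IsGreatest (argmaxOn (Astar n (ftilStar n a i) i) (Set.Icc i n)) (lfStar n a i) := by
  rw [ftilStar_eq_add_step, isGreatest_argmaxOn_Astar_add_step_iff a (lfStar_mem_Icc a hi).2]
  exact isLeast_lfStar a hi

theorem isLeast_argmaxOn_etilStar (hi : i ≤ n) :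
    IsLeast (argmaxOn (Astar n (etilStar n a i) i) (Set.Icc i n)) (leStar n a i) := by
  rw [← isGreatest_argmaxOn_Astar_add_step_iff _ (isGreatest_leStar a hi).1.1.2,
    etilStar_eq_sub_step, sub_add_cancel]
  exact isGreatest_leStar a hi

theorem etilStar_ftilStar (hi : i ≤ n) : etilStar n (ftilStar n a i) i = a := by
  have hindex : leStar n (ftilStar n a i) i = lfStar n a i :=
    (isGreatest_leStar _ hi).unique (isGreatest_argmaxOn_ftilStar a hi)
  rw [etilStar_eq_sub_step, hindex, ftilStar_eq_add_step, add_sub_cancel_right]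

theorem ftilStar_etilStar (hi : i ≤ n) : ftilStar n (etilStar n a i) i = a := by
  have hindex : lfStar n (etilStar n a i) i = leStar n a i :=
    (isLeast_lfStar _ hi).unique (isLeast_argmaxOn_etilStar a hi)
  rw [ftilStar_eq_add_step, hindex, etilStar_eq_sub_step, sub_add_cancel]

theorem epsStar_ftilStar (hi : i ≤ n) :
    epsStar n (ftilStar n a i) i = epsStar n a i + 1 := by
  have hmem := lfStar_mem_Icc a hi
  calc epsStar n (ftilStar n a i) i
      = Astar n (ftilStar n a i) i (lfStar n a i) :=
        (Astar_eq_epsStar _ hi (isGreatest_argmaxOn_ftilStar a hi).1).symm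
    _ = Astar n a i (lfStar n a i) + 1 := by
        rw [ftilStar_eq_add_step, Astar_add, Astar_step hmem.1 hmem.2]
        simp
    _ = epsStar n a i + 1 := by rw [Astar_eq_epsStar a hi (isLeast_lfStar a hi).1]

theorem epsStar_etilStar (hi : i ≤ n) :
    epsStar n (etilStar n a i) i = epsStar n a i - 1 := by
  rw [eq_sub_iff_add_eq, ← epsStar_ftilStar _ hi, ftilStar_etilStar a hi]

theorem m_ftilStar (hi1 : 1 ≤ i) (hi2 : i ≤ n) :
    m n (ftilStar n a i) = m n a + Pi.single i 1 := by
  have hmem := lfStar_mem_Icc a hi2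
  rw [ftilStar_eq_add_step, m_add, m_step hi1 hmem.1 hmem.2]

theorem m_etilStar (hi1 : 1 ≤ i) (hi2 : i ≤ n) :
    m n (etilStar n a i) = m n a - Pi.single i 1 := by
  rw [eq_sub_iff_add_eq, ← m_ftilStar _ hi1 hi2, ftilStar_etilStar a hi2]

end Crystal

theorem stmt4_general (n : ℕ) (a : ℤ → ℤ → ℤ) (i : ℤ) (hi1 : 1 ≤ i) (hi2 : i ≤ (n : ℤ)) :
    (m n (ftilStar n a i) i = m n a i + 1 ∧
      (∀ j : ℤ, j ≠ i → m n (ftilStar n a i) j = m n a j) ∧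
      epsStar n (ftilStar n a i) i = epsStar n a i + 1 ∧
      etilStar n (ftilStar n a i) i = a) ∧
    (m n (etilStar n a i) i = m n a i - 1 ∧
      (∀ j : ℤ, j ≠ i → m n (etilStar n a i) j = m n a j) ∧
      epsStar n (etilStar n a i) i = epsStar n a i - 1 ∧
      ftilStar n (etilStar n a i) i = a) := by
  have hmf := m_ftilStar a hi1 hi2
  have hme := m_etilStar a hi1 hi2
  exact ⟨⟨by simp [hmf], fun j hj => by simp [hmf, hj], epsStar_ftilStar a hi2,
      etilStar_ftilStar a hi2⟩,
    by simp [hme], fun j hj => by simp [hme, hj], epsStar_etilStar a hi2, ftilStar_etilStar a hi2⟩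

/-- `(ℬ, wt, ε_i^*, φ_i^*, ẽ_i^*, f̃_i^*)` is a crystal: for every Lusztig
datum `a` and `i ∈ [1,n]`, (i) `wt(f̃_i^* a) = wt(a) − α_i`, `ε_i^*(f̃_i^* a) = ε_i^*(a)+1`,
and `ẽ_i^* (f̃_i^* a) = a`; (ii) if `ε_i^*(a) > 0` then `wt(ẽ_i^* a) = wt(a) + α_i`,
`ε_i^*(ẽ_i^* a) = ε_i^*(a) − 1`, and `f̃_i^* (ẽ_i^* a) = a`. -/
theorem stmt4 (n : ℕ) (hn : 1 ≤ n) (a : ℤ → ℤ → ℤ)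
    (hnn : ∀ k l : ℤ, 0 ≤ a k l)
    (hsupp : ∀ k l : ℤ, ¬(1 ≤ k ∧ k < l ∧ l ≤ (n : ℤ) + 1) → a k l = 0)
    (i : ℤ) (hi1 : 1 ≤ i) (hi2 : i ≤ (n : ℤ)) :
    (m n (ftilStar n a i) i = m n a i + 1 ∧
      (∀ j : ℤ, 1 ≤ j → j ≤ (n : ℤ) → j ≠ i → m n (ftilStar n a i) j = m n a j) ∧
      epsStar n (ftilStar n a i) i = epsStar n a i + 1 ∧
      etilStar n (ftilStar n a i) i = a) ∧
    (0 < epsStar n a i →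
      m n (etilStar n a i) i = m n a i - 1 ∧
      (∀ j : ℤ, 1 ≤ j → j ≤ (n : ℤ) → j ≠ i → m n (etilStar n a i) j = m n a j) ∧
      epsStar n (etilStar n a i) i = epsStar n a i - 1 ∧
      ftilStar n (etilStar n a i) i = a) := by
  obtain ⟨⟨hmf, hmf', hf⟩, hme, hme', he⟩ := stmt4_general n a i hi1 hi2
  exact ⟨⟨hmf, fun j _ _ => hmf' j, hf⟩, fun _ => ⟨hme, fun j _ _ => hme' j, he⟩⟩

end Stmt4
end

section
/- Let M = (M_K)_{K∈M_n^×} be a collection of integers (with the conventions M_∅ = M_{[1,n+1]} = 0). Then M is a w₀-BZ datum (i.e. satisfies (BZ-0)', (BZ-1)' and (BZ-2)') if and only if the following three conditions hold: (i) M_{[n−i+2,n+1]} = 0 for all i ∈ {1,…,n}; (ii) (edge inequalities) for every w ∈ S_{n+1} and every i ∈ {1,…,n}: M_{w[1,i]} + M_{(w s_i)[1,i]} − M_{w[1,i−1]} − M_{w[1,i+1]} ≤ 0; (iii) (3-term relations) for every w ∈ S_{n+1} and every pair i, j ∈ {1,…,n} with |i − j| = 1, w(i) < w(i+1) and w(j)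 < w(j+1): M_{(w s_i)[1,i]} + M_{(w s_j)[1,j]} = min{ M_{w[1,i]} + M_{(w s_i s_j)[1,j]}, M_{w[1,j]} + M_{(w s_j s_i)[1,i]} }. -/
/-- For `w ∈ S_{n+1}` (acting on `{1,…,n+1}`, modeled as permutations of `Fin (n+1)` in
0-indexed form) and `0 ≤ j ≤ n+1`, the set `w[1,j] = {w(1),…,w(j)}`. -/
def wSet (n : ℕ) (w : Equiv.Perm (Fin (n + 1))) (j : ℕ) : Finset (Fin (n + 1)) :=
  (Finset.univ.filter fun x : Fin (n + 1) => (x : ℕ) < j).image w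

/-!
All the relations are local: with `K = w[1,p]`, the edge inequality at `w` involves only `K` and
the letters `w(p+1), w(p+2)`, and a 3-term relation involves only `K` and the letters
`w(p+1) < w(p+2) < w(p+3)`. Since the symmetric group acts transitively on injective words, every
finite set followed by finitely many distinct letters outside it arises in this way, so letting `w`
and `p` vary is the same as letting `K` and the letters vary.
-/

open Finset Function Equiv

section Relations

variable {α R : Type*} [DecidableEq α]

/-- The inequalities (BZ-1)': local supermodularity of a function on finite sets. -/
def LocallySupermodular [Add R] [LE R] (M : Finset α → R) : Prop :=
  ∀ x y : α, x ≠ y → ∀ K : Finset α, x ∉ K → y ∉ K →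
    M (insert x K) + M (insert y K) ≤ M (insert x (insert y K)) + M K

/-- The equations (BZ-2)': the tropical three-term Plücker relations. -/
def TropicalPluckerRelations [LT α] [Add R] [Min R] (M : Finset α → R) : Prop :=
  ∀ x y z : α, x < y → y < z → ∀ K : Finset α, x ∉ K → y ∉ K → z ∉ K →
    M (insert x (insert z K)) + M (insert y K) =
      min (M (insert x (insert y K)) + M (insert z K)) (M (insert y (insert z K)) + M (insert x K))

end Relations

section Conditions

variable {n : ℕ} {R : Type*}

/-- The normalization (BZ-0)': `M` vanishes on the final segments `[n-i+2,n+1]`, `1 ≤ i ≤ n`. -/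
def VanishesOnFinalSegments [Zero R] (M : Finset (Fin (n + 1)) → R) : Prop :=
  ∀ i : ℕ, 1 ≤ i → i ≤ n → M (univ.filter fun x : Fin (n + 1) => n + 1 - i ≤ (x : ℕ)) = 0

/-- The edge inequalities, condition (ii). The index `i` is 1-based as in the paper while the
letters are 0-based, so `s_i` is the transposition of `i - 1` and `i`. -/
def EdgeInequalities [AddGroup R] [LE R] (M : Finset (Fin (n + 1)) → R) : Prop :=
  ∀ (w : Perm (Fin (n + 1))) (i : ℕ) (_ : 1 ≤ i) (_ : i ≤ n),
    M (wSet n w i) + M (wSet n (w * swap ⟨i - 1, by omega⟩ ⟨i, by omega⟩) i) -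
      M (wSet n w (i - 1)) - M (wSet n w (i + 1)) ≤ 0

/-- The 3-term relations, condition (iii), with `i` and `j` 1-based as in `EdgeInequalities`. -/
def ThreeTermRelations [Add R] [Min R] (M : Finset (Fin (n + 1)) → R) : Prop :=
  ∀ (w : Perm (Fin (n + 1))) (i j : ℕ) (_ : 1 ≤ i) (_ : i ≤ n) (_ : 1 ≤ j) (_ : j ≤ n),
    (i = j + 1 ∨ j = i + 1) →
    w ⟨i - 1, by omega⟩ < w ⟨i, by omega⟩ →
    w ⟨j - 1, by omega⟩ < w ⟨j, by omega⟩ →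
    M (wSet n (w * swap ⟨i - 1, by omega⟩ ⟨i, by omega⟩) i) +
        M (wSet n (w * swap ⟨j - 1, by omega⟩ ⟨j, by omega⟩) j) =
      min
        (M (wSet n w i) +
          M (wSet n (w * swap ⟨i - 1, by omega⟩ ⟨i, by omega⟩ *
            swap ⟨j - 1, by omega⟩ ⟨j, by omega⟩) j))
        (M (wSet n w j) +
          M (wSet n (w * swap ⟨j - 1, by omega⟩ ⟨j, by omega⟩ *
            swap ⟨i - 1, by omega⟩ ⟨i, by omega⟩) i))

end Conditions

section InitialSegments

variable {n : ℕ} (w : Perm (Fin (n + 1)))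

theorem apply_mem_wSet_iff {x : Fin (n + 1)} {p : ℕ} : w x ∈ wSet n w p ↔ (x : ℕ) < p := by
  simp [wSet]

theorem wSet_succ {p : ℕ} (hp : p < n + 1) :
    wSet n w (p + 1) = insert (w ⟨p, hp⟩) (wSet n w p) := by
  rw [wSet, wSet, ← image_insert]
  congr 1
  ext x
  simp only [mem_filter_univ, mem_insert, Fin.ext_iff]
  omega

theorem wSet_mul_swap_of_le {p : ℕ} {a b : Fin (n + 1)} (ha : p ≤ a) (hb : p ≤ b) :
    wSet n (w * swap a b) p = wSet n w p := by
  refine image_congr fun x hx => ?_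
  have hxp : (x : ℕ) < p := by simpa using hx
  rw [Perm.mul_apply, swap_apply_of_ne_of_ne (by rintro rfl; omega) (by rintro rfl; omega)]

theorem wSet_succ_mul_swap {p : ℕ} (hp : p + 1 < n + 1) :
    wSet n (w * swap ⟨p, by omega⟩ ⟨p + 1, hp⟩) (p + 1) =
      insert (w ⟨p + 1, hp⟩) (wSet n w p) := by
  rw [wSet_succ _ (by omega), wSet_mul_swap_of_le w le_rfl (Nat.le_succ p), Perm.mul_apply,
    swap_apply_left]

theorem wSet_add_two_mul_swap_mul_swap {p : ℕ} (hp : p + 2 < n + 1) :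
    wSet n (w * swap ⟨p, by omega⟩ ⟨p + 1, by omega⟩ *
        swap ⟨p + 1, by omega⟩ ⟨p + 2, hp⟩) (p + 2) =
      insert (w ⟨p + 1, by omega⟩) (insert (w ⟨p + 2, hp⟩) (wSet n w p)) := by
  rw [wSet_succ_mul_swap _ hp, wSet_succ_mul_swap w (by omega), Perm.mul_apply,
    swap_apply_of_ne_of_ne (by simp only [ne_eq, Fin.mk.injEq]; omega) (by simp),
    insert_comm]

theorem wSet_succ_mul_swap_mul_swap {p : ℕ} (hp : p + 2 < n + 1) :
    wSet n (w * swap ⟨p + 1, by omega⟩ ⟨p + 2, hp⟩ *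
        swap ⟨p, by omega⟩ ⟨p + 1, by omega⟩) (p + 1) =
      insert (w ⟨p + 2, hp⟩) (wSet n w p) := by
  rw [wSet_succ_mul_swap _ (by omega), wSet_mul_swap_of_le w (Nat.le_succ p) (by simp),
    Perm.mul_apply, swap_apply_left]

end InitialSegments

section Words

variable {n m : ℕ}

theorem exists_perm_wSet_card_eq {K : Finset (Fin (n + 1))} {f : Fin m → Fin (n + 1)}
    (hf : Injective f) (hK : ∀ k, f k ∉ K) :
    ∃ (_ : #K + m ≤ n + 1) (w : Perm (Fin (n + 1))),
      wSet n w #K = K ∧ ∀ k : Fin m, w ⟨#K + k, by omega⟩ = f k := by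
  let word : Fin (#K + m) → Fin (n + 1) := Fin.append (K.orderEmbOfFin rfl) f
  have hword : Injective word := Fin.append_injective_iff.2
    ⟨(K.orderEmbOfFin rfl).injective, hf,
      fun i j h => hK j (h ▸ K.orderEmbOfFin_mem rfl i)⟩
  have hm : #K + m ≤ n + 1 := by simpa using Fintype.card_le_of_injective word hword
  obtain ⟨w, hw⟩ := Perm.exists_extending_pair _ word (Fin.castLE_injective hm) hword
  refine ⟨hm, w, ?_, fun k => (hw (Fin.natAdd _ k)).trans (Fin.append_right ..)⟩
  have hwK (i : Fin #K) : w ⟨i, by omega⟩ = K.orderEmbOfFin rfl i :=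
    (hw (Fin.castAdd m i)).trans (Fin.append_left ..)
  ext x
  rw [← mem_coe (s := K), ← K.range_orderEmbOfFin rfl]
  constructor
  · simp only [wSet, mem_image, mem_filter_univ]
    rintro ⟨y, hy, rfl⟩
    exact ⟨⟨y, hy⟩, (hwK ⟨y, hy⟩).symm⟩
  · rintro ⟨i, rfl⟩
    exact hwK i ▸ (apply_mem_wSet_iff w).2 i.isLt

theorem forall_injective_notMem_iff_forall_perm
    {P : Finset (Fin (n + 1)) → (Fin m → Fin (n + 1)) → Prop} :
    (∀ K f, Injective f → (∀ k, f k ∉ K) → P K f) ↔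
      ∀ (w : Perm (Fin (n + 1))) (p : ℕ) (_ : p + m ≤ n + 1),
        P (wSet n w p) fun k => w ⟨p + k, by omega⟩ := by
  constructor
  · intro h w p hp
    refine h _ _ (fun k l hkl => ?_) fun k => by simp [apply_mem_wSet_iff]
    simpa [Fin.ext_iff] using hkl
  · intro h K f hf hK
    obtain ⟨hm, w, hwK, hwf⟩ := exists_perm_wSet_card_eq hf hK
    simpa only [hwK, hwf] using h w #K hm

end Words

section Equivalences

variable {n : ℕ} {R : Type*} {M : Finset (Fin (n + 1)) → R}

theorem locallySupermodular_iff_forall_perm [Add R] [LE R] :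
    LocallySupermodular M ↔
      ∀ (w : Perm (Fin (n + 1))) (p : ℕ) (_ : p + 2 ≤ n + 1),
        M (insert (w ⟨p, by omega⟩) (wSet n w p)) +
            M (insert (w ⟨p + 1, by omega⟩) (wSet n w p)) ≤
          M (insert (w ⟨p, by omega⟩) (insert (w ⟨p + 1, by omega⟩) (wSet n w p))) +
            M (wSet n w p) := by
  refine Iff.trans ?_ (forall_injective_notMem_iff_forall_perm (m := 2) (P := fun K f =>
    M (insert (f 0) K) + M (insert (f 1) K) ≤ M (insert (f 0) (insert (f 1) K)) + M K))
  constructor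
  · intro h K f hf hK
    exact h _ _ (hf.ne zero_ne_one) K (hK 0) (hK 1)
  · intro h x y hxy K hx hy
    exact h K ![x, y] (injective_pair_iff_ne.2 hxy) (by simp [Fin.forall_fin_two, hx, hy])

theorem tropicalPluckerRelations_iff_forall_perm [Add R] [Min R] :
    TropicalPluckerRelations M ↔
      ∀ (w : Perm (Fin (n + 1))) (p : ℕ) (_ : p + 3 ≤ n + 1),
        w ⟨p, by omega⟩ < w ⟨p + 1, by omega⟩ → w ⟨p + 1, by omega⟩ < w ⟨p + 2, by omega⟩ →
        M (insert (w ⟨p, by omega⟩) (insert (w ⟨p + 2, by omega⟩) (wSet n w p))) +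
            M (insert (w ⟨p + 1, by omega⟩) (wSet n w p)) =
          min
            (M (insert (w ⟨p, by omega⟩) (insert (w ⟨p + 1, by omega⟩) (wSet n w p))) +
              M (insert (w ⟨p + 2, by omega⟩) (wSet n w p)))
            (M (insert (w ⟨p + 1, by omega⟩) (insert (w ⟨p + 2, by omega⟩) (wSet n w p))) +
              M (insert (w ⟨p, by omega⟩) (wSet n w p))) := by
  refine Iff.trans ?_ (forall_injective_notMem_iff_forall_perm (m := 3) (P := fun K f =>
    f 0 < f 1 → f 1 < f 2 →
      M (insert (f 0) (insert (f 2) K)) + M (insert (f 1) K) =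
        min (M (insert (f 0) (insert (f 1) K)) + M (insert (f 2) K))
          (M (insert (f 1) (insert (f 2) K)) + M (insert (f 0) K))))
  constructor
  · intro h K f _ hK hxy hyz
    exact h _ _ _ hxy hyz K (hK 0) (hK 1) (hK 2)
  · intro h x y z hxy hyz K hx hy hz
    have hmono : StrictMono ![x, y, z] := by
      simp [Fin.strictMono_iff_lt_succ, Fin.forall_fin_two, *]
    exact h K ![x, y, z] hmono.injective (by simp [Fin.forall_fin_succ, hx, hy, hz]) hxy hyz

theorem edgeInequalities_iff_locallySupermodular [AddCommGroup R] [Preorder R]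
    [IsOrderedAddMonoid R] : EdgeInequalities M ↔ LocallySupermodular M := by
  rw [locallySupermodular_iff_forall_perm]
  have edge_iff (w : Perm (Fin (n + 1))) (p : ℕ) (hp : p + 2 ≤ n + 1) :
      M (wSet n w (p + 1)) + M (wSet n (w * swap ⟨p, by omega⟩ ⟨p + 1, by omega⟩) (p + 1)) -
          M (wSet n w p) - M (wSet n w (p + 2)) ≤ 0 ↔
        M (insert (w ⟨p, by omega⟩) (wSet n w p)) +
            M (insert (w ⟨p + 1, by omega⟩) (wSet n w p)) ≤
          M (insert (w ⟨p, by omega⟩) (insert (w ⟨p + 1, by omega⟩) (wSet n w p))) +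
            M (wSet n w p) := by
    rw [sub_nonpos, sub_le_iff_le_add, wSet_succ_mul_swap w (by omega),
      wSet_succ w (p := p + 1) (by omega), wSet_succ w (p := p) (by omega), insert_comm]
  constructor
  · intro h w p hp
    exact (edge_iff w p hp).1 (h w (p + 1) (by omega) (by omega))
  · intro h w i hi1 hi2
    obtain ⟨p, rfl⟩ := Nat.exists_eq_add_of_le' hi1
    exact (edge_iff w p (by omega)).2 (h w p (by omega))

theorem threeTermRelations_iff_forall_perm [AddCommMagma R] [LinearOrder R] :
    ThreeTermRelations M ↔
      ∀ (w : Perm (Fin (n + 1))) (p : ℕ) (_ : p + 3 ≤ n + 1),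
        w ⟨p, by omega⟩ < w ⟨p + 1, by omega⟩ → w ⟨p + 1, by omega⟩ < w ⟨p + 2, by omega⟩ →
        M (wSet n (w * swap ⟨p, by omega⟩ ⟨p + 1, by omega⟩) (p + 1)) +
            M (wSet n (w * swap ⟨p + 1, by omega⟩ ⟨p + 2, by omega⟩) (p + 2)) =
          min
            (M (wSet n w (p + 1)) +
              M (wSet n (w * swap ⟨p, by omega⟩ ⟨p + 1, by omega⟩ *
                swap ⟨p + 1, by omega⟩ ⟨p + 2, by omega⟩) (p + 2)))
            (M (wSet n w (p + 2)) +
              M (wSet n (w * swap ⟨p + 1, by omega⟩ ⟨p + 2, by omega⟩ *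
                swap ⟨p, by omega⟩ ⟨p + 1, by omega⟩) (p + 1))) := by
  constructor
  · intro h w p hp
    exact h w (p + 1) (p + 2) (by omega) (by omega) (by omega) (by omega) (.inr rfl)
  · rintro h w i j hi1 _ hj1 _ (rfl | rfl) hwi hwj
    -- Exchanging `i` and `j` only permutes the terms of the relation.
    · obtain ⟨p, rfl⟩ := Nat.exists_eq_add_of_le' hj1
      rw [add_comm, min_comm]
      exact h w p (by omega) hwj hwi
    · obtain ⟨p, rfl⟩ := Nat.exists_eq_add_of_le' hi1
      exact h w p (by omega) hwi hwj

theorem threeTermRelations_iff_tropicalPluckerRelations [AddCommMagma R] [LinearOrder R] :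
    ThreeTermRelations M ↔ TropicalPluckerRelations M := by
  rw [threeTermRelations_iff_forall_perm, tropicalPluckerRelations_iff_forall_perm]
  refine forall₃_congr fun w p hp => imp_congr_right fun _ => imp_congr_right fun _ => ?_
  rw [wSet_add_two_mul_swap_mul_swap w (by omega), wSet_succ_mul_swap_mul_swap w (by omega),
    wSet_succ_mul_swap w (p := p + 1) (by omega), wSet_succ_mul_swap w (p := p) (by omega),
    wSet_succ w (p := p + 1) (by omega), wSet_succ w (p := p) (by omega),
    insert_comm (w ⟨p + 1 + 1, _⟩), insert_comm (w ⟨p + 1, _⟩) (w ⟨p, _⟩), add_comm, min_comm,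
    add_comm (M (insert (w ⟨p, _⟩) (wSet n w p)))]

end Equivalences

theorem stmt5_general {R : Type*} [AddCommGroup R] [LinearOrder R] [IsOrderedAddMonoid R] (n : ℕ)
    (M : Finset (Fin (n + 1)) → R) :
    (VanishesOnFinalSegments M ∧ LocallySupermodular M ∧ TropicalPluckerRelations M) ↔
      (VanishesOnFinalSegments M ∧ EdgeInequalities M ∧ ThreeTermRelations M) := by
  rw [edgeInequalities_iff_locallySupermodular, threeTermRelations_iff_tropicalPluckerRelations]

/-- a collection of integers `M = (M_K)` indexed by Maya diagrams (with the
conventions `M_∅ = M_{[1,n+1]} = 0`; here the 1-indexed letter `i ∈ [1,n+1]` corresponds to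
the element of `Fin (n+1)` with value `i−1`) is a `w₀`-BZ datum — i.e. satisfies (BZ-0)'
(`M_{[n−i+2,n+1]} = 0`), (BZ-1)' and (BZ-2)' — if and only if it satisfies:
(i) the same normalization; (ii) the edge inequalities
`M_{w[1,i]} + M_{(w s_i)[1,i]} − M_{w[1,i−1]} − M_{w[1,i+1]} ≤ 0` for all `w` and `i`; and
(iii) the 3-term relations for all `w` and all `i,j` with `|i−j| = 1`, `w(i) < w(i+1)` and
`w(j) < w(j+1)`. -/
theorem stmt5 (n : ℕ) (hn : 1 ≤ n) (M : Finset (Fin (n + 1)) → ℤ)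
    (hM0 : M ∅ = 0) (hMfull : M Finset.univ = 0) :
    (((∀ i : ℕ, 1 ≤ i → i ≤ n →
          M (Finset.univ.filter fun x : Fin (n + 1) => n + 1 - i ≤ (x : ℕ)) = 0) ∧
      (∀ x y : Fin (n + 1), x ≠ y → ∀ K : Finset (Fin (n + 1)), x ∉ K → y ∉ K →
          M (insert x K) + M (insert y K) ≤ M (insert x (insert y K)) + M K) ∧
      (∀ x y z : Fin (n + 1), x < y → y < z → ∀ K : Finset (Fin (n + 1)),
          x ∉ K → y ∉ K → z ∉ K →
          M (insert x (insert z K)) + M (insert y K) =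
            min (M (insert x (insert y K)) + M (insert z K))
              (M (insert y (insert z K)) + M (insert x K)))) ↔
      ((∀ i : ℕ, 1 ≤ i → i ≤ n →
          M (Finset.univ.filter fun x : Fin (n + 1) => n + 1 - i ≤ (x : ℕ)) = 0) ∧
      (∀ w : Equiv.Perm (Fin (n + 1)), ∀ i : ℕ, ∀ _hi1 : 1 ≤ i, ∀ _hi2 : i ≤ n,
          M (wSet n w i) +
              M (wSet n (w * Equiv.swap (⟨i - 1, by omega⟩ : Fin (n + 1)) ⟨i, by omega⟩) i) -
              M (wSet n w (i - 1)) - M (wSet n w (i + 1)) ≤ 0) ∧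
      (∀ w : Equiv.Perm (Fin (n + 1)), ∀ i j : ℕ,
          ∀ _hi1 : 1 ≤ i, ∀ _hi2 : i ≤ n, ∀ _hj1 : 1 ≤ j, ∀ _hj2 : j ≤ n,
          (i = j + 1 ∨ j = i + 1) →
          w ⟨i - 1, by omega⟩ < w ⟨i, by omega⟩ →
          w ⟨j - 1, by omega⟩ < w ⟨j, by omega⟩ →
          M (wSet n (w * Equiv.swap (⟨i - 1, by omega⟩ : Fin (n + 1)) ⟨i, by omega⟩) i) +
              M (wSet n (w * Equiv.swap (⟨j - 1, by omega⟩ : Fin (n + 1)) ⟨j, by omega⟩) j) =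
            min
              (M (wSet n w i) +
                M (wSet n (w * Equiv.swap (⟨i - 1, by omega⟩ : Fin (n + 1)) ⟨i, by omega⟩ *
                    Equiv.swap (⟨j - 1, by omega⟩ : Fin (n + 1)) ⟨j, by omega⟩) j))
              (M (wSet n w j) +
                M (wSet n (w * Equiv.swap (⟨j - 1, by omega⟩ : Fin (n + 1)) ⟨j, by omega⟩ *
                    Equiv.swap (⟨i - 1, by omega⟩ : Fin (n + 1)) ⟨i, by omega⟩) i))))) :=
  stmt5_general n M
end

section
/- Let M = (M_K) be a w₀-BZ datum and i ∈ {1,…,n}, and set ε_i(M) = −(M_{[1,i]} + M_{[1,i+1]∖{i}} − M_{[1,i+1]} − M_{[1,i−1]}), which is a nonnegative integer. Then: (1) if ε_i(M) > 0, there exists a unique w₀-BZ datum M' with M'_{[1,i]} = M_{[1,i]} + 1 and M'_K = M_K for all K ∈ M_n^× ∖ M_n^×(i); (2) there exists a unique w₀-BZ datum M'' with M''_{[1,i]} = M_{[1,i]} − 1 and M''_K = M_K for all K ∈ M_n^× ∖ M_n^×(i). -/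
/-- A BZ datum of type `A_n`: a collection of integers `M = (M_K)` indexed by Maya diagrams
`K ⊆ [1,n+1]` (modeled as a total function on `Finset ℕ`, with the conventions
`M_∅ = M_{[1,n+1]} = 0`), satisfying the inequalities (BZ-1)' and the 3-term relations
(BZ-2)'. -/
def IsBZ (n : ℕ) (M : Finset ℕ → ℤ) : Prop :=
  M ∅ = 0 ∧ M (Finset.Icc 1 (n + 1)) = 0 ∧
  (∀ i j : ℕ, ∀ K : Finset ℕ, 1 ≤ i → i ≤ n + 1 → 1 ≤ j → j ≤ n + 1 → i ≠ j →
    K ⊆ Finset.Icc 1 (n + 1) → i ∉ K → j ∉ K →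
    M (insert i K) + M (insert j K) ≤ M (insert i (insert j K)) + M K) ∧
  (∀ i j k : ℕ, ∀ K : Finset ℕ, 1 ≤ i → i < j → j < k → k ≤ n + 1 →
    K ⊆ Finset.Icc 1 (n + 1) → i ∉ K → j ∉ K → k ∉ K →
    M (insert i (insert k K)) + M (insert j K) =
      min (M (insert i (insert j K)) + M (insert k K))
        (M (insert j (insert k K)) + M (insert i K)))

/-- A `w₀`-BZ datum: a BZ datum with `M_{[n−i+2,n+1]} = 0` for all `1 ≤ i ≤ n`. -/
def IsW0BZ (n : ℕ) (M : Finset ℕ → ℤ) : Prop :=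
  IsBZ n M ∧ ∀ i : ℕ, 1 ≤ i → i ≤ n → M (Finset.Icc (n - i + 2) (n + 1)) = 0

/-- An `e`-BZ datum: a BZ datum with `M_{[1,i]} = 0` for all `1 ≤ i ≤ n`. -/
def IsEBZ (n : ℕ) (M : Finset ℕ → ℤ) : Prop :=
  IsBZ n M ∧ ∀ i : ℕ, 1 ≤ i → i ≤ n → M (Finset.Icc 1 i) = 0

/-!
Put `a = i`, `b = i + 1`, and let `L` range over the subsets of `[1,n+1] ∖ {a, b}`. The values of a
new datum `N` that may differ from `M` are the `N_{La}`, and the three-term relations on `a`, `b`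
and a third element `k` say that, when `k` is added to `L` (if `k > b`) or removed from it
(if `k < a`), the gap `N_{La} - N_{Lb}` is replaced by its minimum with a weight computed from
values of `M` only. So the gaps spread from `L = [1,i-1]` to the whole cube, which gives
uniqueness; they do so consistently, for any prescribed starting gap, because the three-term
relations of `M` make the weights around each square of the cube compatible. The other three-term
relations of `N` follow by piecewise-linear implications on four elements.

The inequalities (BZ-1)' are three-term relations as well: adjoin a largest element `t` to the
ground set and extend `M` by `M_{Kt} = M_K`. The datum `N` built on the larger ground set is again
independent of `t`: by uniqueness this need only be checked at `[1,i]`, where it amounts to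
`ε_i(N) ≥ 0`.
-/

section FourElements

variable {α : Type*} [DecidableEq α] {F : Finset α → ℤ} {K : Finset α} {w x y z : α}

/-- The tropical three-term Plücker relation (BZ-2)' on `x < y < z` over `K`. The order is not part
of the definition; it is imposed by `IsTriple`. -/
def ThreeTerm (F : Finset α → ℤ) (K : Finset α) (x y z : α) : Prop :=
  F (insert x (insert z K)) + F (insert y K) =
    min (F (insert x (insert y K)) + F (insert z K))
      (F (insert y (insert z K)) + F (insert x K))

/-- The tropical Grassmann–Plücker relation on `w < x < y < z` over `K`, which involves only sets of
the same size. For `e` among the four, `delete_e` and `insert_e` name the three-term relations on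
the other three elements over `K` and over `insert e K`; this relation mediates between them. -/
def GrassmannPlucker (F : Finset α → ℤ) (K : Finset α) (w x y z : α) : Prop :=
  F (insert w (insert y K)) + F (insert x (insert z K)) =
    min (F (insert w (insert x K)) + F (insert y (insert z K)))
      (F (insert w (insert z K)) + F (insert x (insert y K)))

theorem ThreeTerm.delete_second (delete_w : ThreeTerm F K x y z) (delete_y : ThreeTerm F K w x z)
    (delete_z : ThreeTerm F K w x y) : ThreeTerm F K w y z := by
  simp only [ThreeTerm] at *
  omega

theorem ThreeTerm.delete_third (delete_w : ThreeTerm F K x y z) (delete_x : ThreeTerm F K w y z)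
    (delete_z : ThreeTerm F K w x y) : ThreeTerm F K w x z := by
  simp only [ThreeTerm] at *
  omega

theorem ThreeTerm.insert_second (insert_w : ThreeTerm F (insert w K) x y z)
    (insert_y : ThreeTerm F (insert y K) w x z) (insert_z : ThreeTerm F (insert z K) w x y) :
    ThreeTerm F (insert x K) w y z := by
  simp only [ThreeTerm, Finset.insert_comm] at *
  omega

theorem ThreeTerm.insert_third (insert_w : ThreeTerm F (insert w K) x y z)
    (insert_x : ThreeTerm F (insert x K) w y z) (insert_z : ThreeTerm F (insert z K) w x y) :
    ThreeTerm F (insert y K) w x z := by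
  simp only [ThreeTerm, Finset.insert_comm] at *
  omega

theorem GrassmannPlucker.of_delete (delete_w : ThreeTerm F K x y z) (delete_y : ThreeTerm F K w x z)
    (delete_z : ThreeTerm F K w x y) : GrassmannPlucker F K w x y z := by
  simp only [ThreeTerm, GrassmannPlucker] at *
  omega

theorem GrassmannPlucker.of_insert (insert_w : ThreeTerm F (insert w K) x y z)
    (insert_x : ThreeTerm F (insert x K) w y z) (insert_z : ThreeTerm F (insert z K) w x y) :
    GrassmannPlucker F K w x y z := by
  simp only [ThreeTerm, GrassmannPlucker, Finset.insert_comm] at *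
  omega

theorem GrassmannPlucker.insert_first (h : GrassmannPlucker F K w x y z)
    (insert_x : ThreeTerm F (insert x K) w y z) (insert_y : ThreeTerm F (insert y K) w x z) :
    ThreeTerm F (insert w K) x y z := by
  simp only [ThreeTerm, GrassmannPlucker, Finset.insert_comm] at *
  omega

theorem GrassmannPlucker.insert_fourth (h : GrassmannPlucker F K w x y z)
    (insert_x : ThreeTerm F (insert x K) w y z) (insert_y : ThreeTerm F (insert y K) w x z) :
    ThreeTerm F (insert z K) w x y := by
  simp only [ThreeTerm, GrassmannPlucker, Finset.insert_comm] at *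
  omega

theorem GrassmannPlucker.delete_fourth (h : GrassmannPlucker F K w x y z)
    (delete_x : ThreeTerm F K w y z) (delete_y : ThreeTerm F K w x z) : ThreeTerm F K w x y := by
  simp only [ThreeTerm, GrassmannPlucker] at *
  omega

end FourElements

section MinPotential

variable {α β : Type*} [DecidableEq α] [LinearOrder β] {X : Finset α} {B : Finset α → α → β}

/-- `A` is a potential on the cube of subsets of `X` for the edge weights `B`: crossing the edge
from `D` to `insert k D` replaces `A` by its minimum with `B D k`. -/
def IsMinPotential (X : Finset α) (B : Finset α → α → β) (A : Finset α → β) : Prop :=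
  ∀ D ⊆ X, ∀ k ∈ X, k ∉ D → A (insert k D) = min (A D) (B D k)

theorem IsMinPotential.congr {A A' : Finset α → β} {B' : Finset α → α → β}
    (h : IsMinPotential X B A) (hA : ∀ D ⊆ X, A D = A' D)
    (hB : ∀ D ⊆ X, ∀ k ∈ X, k ∉ D → B D k = B' D k) : IsMinPotential X B' A' := by
  intro D hD k hk hkD
  rw [← hA D hD, ← hA _ (Finset.insert_subset hk hD), ← hB D hD k hk hkD, h D hD k hk hkD]

theorem IsMinPotential.eqOn {A₁ A₂ : Finset α → β} (h₁ : IsMinPotential X B A₁)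
    (h₂ : IsMinPotential X B A₂) (h : A₁ ∅ = A₂ ∅) : ∀ D ⊆ X, A₁ D = A₂ D := by
  intro D hD
  induction D using Finset.induction_on with
  | empty => exact h
  | insert k D hk ih =>
    obtain ⟨hkX, hDX⟩ := Finset.insert_subset_iff.1 hD
    rw [h₁ D hDX k hkX hk, h₂ D hDX k hkX hk, ih hDX]

theorem exists_isMinPotential (x : β)
    (diamond : ∀ D ⊆ X, ∀ k ∈ X, ∀ l ∈ X, k ≠ l → k ∉ D → l ∉ D →
      min (B D k) (B (insert k D) l) = min (B D l) (B (insert l D) k)) :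
    ∃ A : Finset α → β, A ∅ = x ∧ IsMinPotential X B A := by
  induction X using Finset.induction_on with
  | empty => exact ⟨fun _ => x, rfl, by simp [IsMinPotential]⟩
  | insert e X he ih =>
    obtain ⟨A, hA0, hA⟩ := ih fun D hD k hk l hl =>
      diamond D (hD.trans (Finset.subset_insert _ _)) k (Finset.mem_insert_of_mem hk) l
        (Finset.mem_insert_of_mem hl)
    refine ⟨fun D => if e ∈ D then min (A (D.erase e)) (B (D.erase e) e) else A D,
      by simpa using hA0, fun D hD k hk hkD => ?_⟩
    obtain rfl | hke := eq_or_ne k e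
    · simp [hkD]
    have hkX : k ∈ X := Finset.mem_of_mem_insert_of_ne hk hke
    by_cases heD : e ∈ D
    · obtain ⟨D, heD', rfl⟩ : ∃ D', e ∉ D' ∧ insert e D' = D :=
        ⟨D.erase e, Finset.notMem_erase e D, Finset.insert_erase heD⟩
      have hkD' : k ∉ D := fun h => hkD (Finset.mem_insert_of_mem h)
      have hDX : D ⊆ X := by grind
      have heKD : e ∉ insert k D := by grind
      rw [Finset.insert_comm]
      simp only [Finset.mem_insert_self, if_true, Finset.erase_insert heD',
        Finset.erase_insert heKD, hA D hDX k hkX hkD', min_assoc]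
      rw [diamond D (by grind) k hk e (Finset.mem_insert_self e X) hke hkD' heD']
    · have heKD : e ∉ insert k D := by grind
      simp only [heD, heKD, if_false]
      exact hA D (by grind) k hkX hkD

end MinPotential

section Plucker

variable {α : Type*} [LinearOrder α] {E K : Finset α} {a b x y z : α} {F M N : Finset α → ℤ}

/-- `x < y < z` lie in `E` outside `K ⊆ E`: the index set of the relations (BZ-2)'. -/
@[grind]
structure IsTriple (E K : Finset α) (x y z : α) : Prop where
  subset : K ⊆ E
  left_mem : x ∈ E \ K
  middle_mem : y ∈ E \ K
  right_mem : z ∈ E \ K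
  left_lt : x < y
  lt_right : y < z

/-- `b` is the immediate successor of `a` in `E`, as `i + 1` is of `i` in `[1,n+1]`. -/
@[grind]
structure IsConsecutive (E : Finset α) (a b : α) : Prop where
  left_mem : a ∈ E
  right_mem : b ∈ E
  lt : a < b
  le_or_le : ∀ k ∈ E, k ≤ a ∨ b ≤ k

/-- The relations (BZ-2)' on the ground set `E`. -/
def PluckerOn (E : Finset α) (F : Finset α → ℤ) : Prop :=
  ∀ ⦃K x y z⦄, IsTriple E K x y z → ThreeTerm F K x y z

/-- The relations (BZ-2)' on the triples of `E` consisting of `a`, `b` and an element outside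
`[a, b]`. -/
def PluckerAt (E : Finset α) (a b : α) (F : Finset α → ℤ) : Prop :=
  (∀ ⦃L k⦄, IsTriple E L a b k → ThreeTerm F L a b k) ∧
    ∀ ⦃L k⦄, IsTriple E L k a b → ThreeTerm F L k a b

/-- `N` and `M` agree on the subsets of `E` that contain `b` or miss `a`; for `a = i` and
`b = i + 1` these are the ones outside `M_n^×(i)`. -/
def AgreeOff (E : Finset α) (a b : α) (N M : Finset α → ℤ) : Prop :=
  ∀ K ⊆ E, ¬(a ∈ K ∧ b ∉ K) → N K = M K

theorem PluckerOn.pluckerAt (hF : PluckerOn E F) (a b : α) : PluckerAt E a b F :=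
  ⟨fun _ _ h => hF h, fun _ _ h => hF h⟩

theorem PluckerOn.threeTerm_of_agreeOff (hM : PluckerOn E M) (hN : AgreeOff E a b N M)
    (hT : IsTriple E K x y z) (hab : a ∉ K ∧ a ≠ x ∧ a ≠ y ∧ a ≠ z ∨ b ∈ K) :
    ThreeTerm N K x y z := by
  have h := hM hT
  unfold ThreeTerm at *
  rwa [hN _ (by grind) (by grind), hN _ (by grind) (by grind), hN _ (by grind) (by grind),
    hN _ (by grind) (by grind), hN _ (by grind) (by grind), hN _ (by grind) (by grind)]

theorem PluckerAt.threeTerm_of_notMem (hp : PluckerAt E a b N) (hab : IsConsecutive E a b)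
    (hM : PluckerOn E M) (hN : AgreeOff E a b N M) (hT : IsTriple E K x y z) (haK : a ∉ K) :
    ThreeTerm N K x y z := by
  have off {K x y z} := hM.threeTerm_of_agreeOff (K := K) (x := x) (y := y) (z := z) hN
  by_cases hoff : a ≠ x ∧ a ≠ y ∧ a ≠ z ∨ b ∈ K
  · exact off hT (by grind)
  obtain ⟨hmem, hbK⟩ : (a = x ∨ a = y ∨ a = z) ∧ b ∉ K := by grind
  rcases hmem with rfl | rfl | rfl
  · obtain rfl | hby := eq_or_ne b y
    · exact hp.1 hT
    exact .delete_second (x := b) (off (by grind) (by grind)) (hp.1 (by grind)) (hp.1 (by grind))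
  · obtain rfl | hbz := eq_or_ne b z
    · exact hp.2 hT
    exact .delete_third (y := b) (hp.1 (by grind)) (off (by grind) (by grind)) (hp.2 (by grind))
  · have gp : GrassmannPlucker N K x y a b :=
      .of_insert (hp.2 (by grind)) (hp.2 (by grind)) (off (by grind) (by grind))
    exact gp.delete_fourth (hp.2 (by grind)) (off (by grind) (by grind))

theorem pluckerOn_of_forall_notMem
    (h : ∀ ⦃K x y z⦄, IsTriple E K x y z → a ∉ K → ThreeTerm F K x y z) : PluckerOn E F := by
  intro K x y z hT
  by_cases haK : a ∉ K
  · exact h hT haK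
  obtain ⟨K, haK', rfl⟩ : ∃ K', a ∉ K' ∧ insert a K' = K :=
    ⟨K.erase a, Finset.notMem_erase a K, Finset.insert_erase (not_not.1 haK)⟩
  have position : a < x ∨ (x < a ∧ a < y) ∨ (y < a ∧ a < z) ∨ z < a := by grind
  have t {K x y z} (hT : IsTriple E K x y z ∧ a ∉ K) := h hT.1 hT.2
  rcases position with hax | ⟨hxa, hay⟩ | ⟨hya, haz⟩ | hza
  · have gp : GrassmannPlucker F K a x y z :=
      .of_delete (t (by grind)) (t (by grind)) (t (by grind))
    exact gp.insert_first (t (by grind)) (t (by grind))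
  · exact .insert_second (t (by grind)) (t (by grind)) (t (by grind))
  · exact .insert_third (t (by grind)) (t (by grind)) (t (by grind))
  · have gp : GrassmannPlucker F K x y z a :=
      .of_delete (t (by grind)) (t (by grind)) (t (by grind))
    exact gp.insert_fourth (t (by grind)) (t (by grind))

theorem PluckerAt.pluckerOn (hp : PluckerAt E a b N) (hab : IsConsecutive E a b)
    (hM : PluckerOn E M) (hN : AgreeOff E a b N M) : PluckerOn E N :=
  pluckerOn_of_forall_notMem fun _ _ _ _ => hp.threeTerm_of_notMem hab hM hN

end Plucker

section Exchange

variable {α : Type*} [DecidableEq α] {F : Finset α → ℤ} {L : Finset α} {a b k l : α}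

/-- The change of `F` when `b` is replaced by `a` in `insert b L`; the unknown quantity when `F` is
modified only on sets that contain `a` and not `b`. -/
def swapGap (F : Finset α → ℤ) (a b : α) (L : Finset α) : ℤ :=
  F (insert a L) - F (insert b L)

/-- The bound with which `swapGap` is cut off when `k` is added to or removed from `L`. No set in it
contains `a` without `b`, so it is unchanged by passing to a function related by `AgreeOff`. -/
def swapWeight (F : Finset α → ℤ) (a b : α) (L : Finset α) (k : α) : ℤ :=
  F (insert a (insert b L)) + F (insert k L) - F (insert b (insert k L)) - F (insert b L)

theorem threeTerm_right_iff :
    ThreeTerm F L a b k ↔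
      swapGap F a b (insert k L) = min (swapGap F a b L) (swapWeight F a b L k) := by
  unfold ThreeTerm swapGap swapWeight
  omega

theorem threeTerm_left_iff :
    ThreeTerm F L k a b ↔
      swapGap F a b L = min (swapGap F a b (insert k L)) (swapWeight F a b L k) := by
  simp only [ThreeTerm, swapGap, swapWeight, Finset.insert_comm]
  omega

theorem swapWeight_diamond_of_left (hb : ThreeTerm F L k l b)
    (ha : ThreeTerm F (insert b L) k l a) :
    min (swapWeight F a b L k) (swapWeight F a b (insert k L) l) =
      min (swapWeight F a b L l) (swapWeight F a b (insert l L) k) := by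
  simp only [ThreeTerm, swapWeight, Finset.insert_comm] at *
  omega

theorem swapWeight_diamond_of_right (hb : ThreeTerm F L b k l)
    (ha : ThreeTerm F (insert b L) a k l) :
    min (swapWeight F a b L k) (swapWeight F a b (insert k L) l) =
      min (swapWeight F a b L l) (swapWeight F a b (insert l L) k) := by
  simp only [ThreeTerm, swapWeight, Finset.insert_comm] at *
  omega

theorem swapWeight_diamond_of_between (hb : ThreeTerm F L k b l)
    (ha : ThreeTerm F (insert b L) k a l) :
    min (swapWeight F a b L k) (swapWeight F a b L l) =
      min (swapWeight F a b (insert k L) l) (swapWeight F a b (insert l L) k) := by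
  simp only [ThreeTerm, swapWeight, Finset.insert_comm] at *
  omega

end Exchange

section Potential

open scoped symmDiff

variable {α : Type*} [LinearOrder α] {E : Finset α} {a b : α} {F M N : Finset α → ℤ}

/-- The elements of `E` less than `a`; this is `[1,i-1]` in the case of BZ data. -/
def below (E : Finset α) (a : α) : Finset α :=
  E.filter (· < a)

/-- `swapWeight` on the cube of subsets of `E \ {a, b}`, where `D` stands for `L = D ∆ below E a`:
then `∅` is the starting point `L = below E a`, and inserting `k` into `D` removes `k` from `L` if
`k < a` and adds it otherwise. The `erase` takes the endpoint of the edge that misses `k`. -/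
def edgeWeight (F : Finset α → ℤ) (E : Finset α) (a b : α) (D : Finset α) (k : α) : ℤ :=
  swapWeight F a b ((D ∆ below E a).erase k) k

theorem edgeWeight_diamond_of_lt {D : Finset α} {k l : α} (hM : PluckerOn E M)
    (hab : IsConsecutive E a b)
    (hD : D ⊆ E \ {a, b}) (hk : k ∈ E \ {a, b}) (hl : l ∈ E \ {a, b}) (hkl : k < l)
    (hkD : k ∉ D) (hlD : l ∉ D) :
    min (edgeWeight M E a b D k) (edgeWeight M E a b (insert k D) l) =
      min (edgeWeight M E a b D l) (edgeWeight M E a b (insert l D) k) := by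
  have hmem : ∀ t, t ∈ below E a ↔ t ∈ E ∧ t < a := by simp [below]
  set P := below E a
  obtain ⟨L, hL⟩ : ∃ L, L = ((D ∆ P).erase k).erase l := ⟨_, rfl⟩
  have hLE : L ⊆ E \ {a, b, k, l} := by grind [Finset.mem_symmDiff]
  have hDk : (D ∆ P).erase k = if l < a then insert l L else L := by
    grind [Finset.mem_symmDiff]
  have hDl : (D ∆ P).erase l = if k < a then insert k L else L := by
    grind [Finset.mem_symmDiff]
  have hkDl : ((insert k D) ∆ P).erase l = if k < a then L else insert k L := by
    grind [Finset.mem_symmDiff]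
  have hlDk : ((insert l D) ∆ P).erase k = if l < a then L else insert l L := by
    grind [Finset.mem_symmDiff]
  have position : l < a ∨ (k < a ∧ b < l) ∨ b < k := by grind
  unfold edgeWeight
  rw [hDk, hDl, hkDl, hlDk]
  rcases position with hla | ⟨hka, hbl⟩ | hbk
  · simp only [hla, hkl.trans hla, if_true]
    simpa only [min_comm] using
      (swapWeight_diamond_of_left (hM (by grind)) (hM (by grind))).symm
  · simp only [hka, (hab.lt.trans hbl).not_gt, if_true, if_false]
    exact swapWeight_diamond_of_between (hM (by grind)) (hM (by grind))
  · simp only [(hab.lt.trans hbk).not_gt, (hab.lt.trans (hbk.trans hkl)).not_gt, if_false]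
    exact swapWeight_diamond_of_right (hM (by grind)) (hM (by grind))

theorem exists_isMinPotential_edgeWeight (hM : PluckerOn E M) (hab : IsConsecutive E a b) (c : ℤ) :
    ∃ A : Finset α → ℤ, A ∅ = c ∧ IsMinPotential (E \ {a, b}) (edgeWeight M E a b) A := by
  refine exists_isMinPotential c fun D hD k hk l hl hkl hkD hlD => ?_
  rcases hkl.lt_or_gt with hlt | hlt
  · exact edgeWeight_diamond_of_lt hM hab hD hk hl hlt hkD hlD
  · exact (edgeWeight_diamond_of_lt hM hab hD hl hk hlt hlD hkD).symm

theorem pluckerAt_iff_isMinPotential (hab : IsConsecutive E a b) :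
    PluckerAt E a b F ↔ IsMinPotential (E \ {a, b}) (edgeWeight F E a b)
      (fun D => swapGap F a b (D ∆ below E a)) := by
  have hmem : ∀ t, t ∈ below E a ↔ t ∈ E ∧ t < a := by simp [below]
  unfold edgeWeight
  set P := below E a
  constructor
  · intro hF D hD k hk hkD
    have position : k < a ∨ b < k := by grind
    rcases position with hka | hbk
    · have hDP : D ∆ P = insert k (insert k D ∆ P) := by grind [Finset.mem_symmDiff]
      have hkL : k ∉ insert k D ∆ P := by grind [Finset.mem_symmDiff]
      beta_reduce
      rw [hDP, Finset.erase_insert hkL]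
      exact threeTerm_left_iff.1 (hF.2 (by grind [Finset.mem_symmDiff]))
    · have hDP : insert k D ∆ P = insert k (D ∆ P) := by grind [Finset.mem_symmDiff]
      have hkL : k ∉ D ∆ P := by grind [Finset.mem_symmDiff]
      beta_reduce
      rw [hDP, Finset.erase_eq_of_notMem hkL]
      exact threeTerm_right_iff.1 (hF.1 (by grind [Finset.mem_symmDiff]))
  · refine fun hF => ⟨fun L k hT => threeTerm_right_iff.2 ?_, fun L k hT => threeTerm_left_iff.2 ?_⟩
    · have hD : insert k (L ∆ P) = insert k L ∆ P := by grind [Finset.mem_symmDiff]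
      have h := hF (L ∆ P) (by grind [Finset.mem_symmDiff]) k (by grind)
        (by grind [Finset.mem_symmDiff])
      beta_reduce at h
      rwa [hD, symmDiff_symmDiff_cancel_right, symmDiff_symmDiff_cancel_right,
        Finset.erase_eq_of_notMem (by grind)] at h
    · have hD : insert k (insert k L ∆ P) = L ∆ P := by grind [Finset.mem_symmDiff]
      have h := hF (insert k L ∆ P) (by grind [Finset.mem_symmDiff]) k (by grind)
        (by grind [Finset.mem_symmDiff])
      beta_reduce at h
      rwa [hD, symmDiff_symmDiff_cancel_right, symmDiff_symmDiff_cancel_right,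
        Finset.erase_insert (by grind)] at h

theorem AgreeOff.edgeWeight_eq (hN : AgreeOff E a b N M) (hab : IsConsecutive E a b)
    {D : Finset α} {k : α} (hD : D ⊆ E \ {a, b}) (hk : k ∈ E \ {a, b}) :
    edgeWeight N E a b D k = edgeWeight M E a b D k := by
  have hLE : (D ∆ below E a).erase k ⊆ E \ {a, b} := by grind [below, Finset.mem_symmDiff]
  unfold edgeWeight swapWeight
  rw [hN _ (by grind) (by grind), hN _ (by grind) (by grind), hN _ (by grind) (by grind),
    hN _ (by grind) (by grind)]

theorem PluckerAt.eq_of_agreeOff (hM : PluckerAt E a b M) (hN : PluckerAt E a b N)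
    (hab : IsConsecutive E a b) (hNM : AgreeOff E a b N M)
    (h : N (insert a (below E a)) = M (insert a (below E a))) : ∀ K ⊆ E, N K = M K := by
  intro K hK
  by_cases hmoved : a ∈ K ∧ b ∉ K
  · have hgap := (((pluckerAt_iff_isMinPotential hab).1 hN).congr (fun _ _ => rfl)
      fun D hD k hk _ => hNM.edgeWeight_eq hab hD hk).eqOn
        ((pluckerAt_iff_isMinPotential hab).1 hM)
        (by simp [swapGap, ← Finset.bot_eq_empty, bot_symmDiff, h,
          hNM (insert b (below E a)) (by grind [below]) (by grind)])
        (K.erase a ∆ below E a) (by grind [below, Finset.mem_symmDiff])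
    simp only [symmDiff_symmDiff_cancel_right, swapGap, Finset.insert_erase hmoved.1,
      hNM (insert b (K.erase a)) (by grind) (by grind)] at hgap
    exact sub_left_injective hgap
  · exact hNM K hK hmoved

theorem PluckerOn.exists_agreeOff (hM : PluckerOn E M) (hab : IsConsecutive E a b) (c : ℤ) :
    ∃ N, PluckerOn E N ∧ AgreeOff E a b N M ∧ N (insert a (below E a)) = c := by
  obtain ⟨A, hA0, hA⟩ :=
    exists_isMinPotential_edgeWeight hM hab (c - M (insert b (below E a)))
  let N : Finset α → ℤ := fun K => if a ∈ K ∧ b ∉ K then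
    M (insert b (K.erase a)) + A (K.erase a ∆ below E a) else M K
  have hNM : AgreeOff E a b N M := fun K _ hK => if_neg hK
  have hN : ∀ L, a ∉ L → b ∉ L → N (insert a L) = M (insert b L) + A (L ∆ below E a) := by
    intro L haL hbL
    simp [N, haL, hbL, hab.lt.ne']
  have hgap : ∀ D ⊆ E \ {a, b}, A D = swapGap N a b (D ∆ below E a) := by
    intro D hD
    have ha : a ∉ D ∆ below E a := by grind [below, Finset.mem_symmDiff]
    have hb : b ∉ D ∆ below E a := by grind [below, Finset.mem_symmDiff]
    rw [swapGap, hN _ ha hb, hNM (insert b _) (by grind [below, Finset.mem_symmDiff]) (by grind),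
      symmDiff_symmDiff_cancel_right, add_sub_cancel_left]
  have hNpot := hA.congr hgap fun D hD k hk _ => (hNM.edgeWeight_eq hab hD hk).symm
  refine ⟨N, ((pluckerAt_iff_isMinPotential hab).2 hNpot).pluckerOn hab hM hNM, hNM, ?_⟩
  rw [hN _ (by grind [below]) (by grind [below]), symmDiff_self, Finset.bot_eq_empty, hA0,
    add_sub_cancel]

end Potential

section Supermodular

variable {α : Type*} [LinearOrder α] {E : Finset α} {a b t : α} {F M N : Finset α → ℤ}

/-- The inequalities (BZ-1)' on the ground set `E`. -/
def SupermodularOn (E : Finset α) (F : Finset α → ℤ) : Prop :=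
  ∀ K ⊆ E, ∀ x ∈ E \ K, ∀ y ∈ E \ K, x ≠ y →
    F (insert x K) + F (insert y K) ≤ F (insert x (insert y K)) + F K

theorem PluckerOn.erase_top (hF : PluckerOn E F) (hs : SupermodularOn E F) (ht : ∀ k ∈ E, k < t) :
    PluckerOn (insert t E) fun K => F (K.erase t) := by
  intro K x y z hT
  have hxt : x ≠ t := by grind
  have hyt : y ≠ t := by grind
  unfold ThreeTerm
  obtain rfl | hzt := eq_or_ne z t
  · have h := hs K (by grind) x (by grind) y (by grind) hT.left_lt.ne
    have hzK : z ∉ K := by grind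
    simp only [Finset.erase_insert_of_ne hxt, Finset.erase_insert_of_ne hyt,
      Finset.erase_insert hzK, Finset.erase_eq_of_notMem hzK]
    omega
  · simp only [Finset.erase_insert_of_ne hxt, Finset.erase_insert_of_ne hyt,
      Finset.erase_insert_of_ne hzt]
    exact hF (by grind)

theorem PluckerOn.supermodularOn (hF : PluckerOn (insert t E) F) (ht : ∀ k ∈ E, k < t)
    (hinv : ∀ K ⊆ E, F (insert t K) = F K) : SupermodularOn E F := by
  have of_lt : ∀ K ⊆ E, ∀ x ∈ E \ K, ∀ y ∈ E \ K, x < y →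
      F (insert x K) + F (insert y K) ≤ F (insert x (insert y K)) + F K := by
    intro K hK x hx y hy hxy
    have h : ThreeTerm F K x y t := hF (by grind)
    simp only [ThreeTerm, Finset.insert_comm _ t, hinv _ hK, hinv (insert x K) (by grind),
      hinv (insert y K) (by grind)] at h
    omega
  intro K hK x hx y hy hxy
  rcases hxy.lt_or_gt with hlt | hlt
  · exact of_lt K hK x hx y hy hlt
  · rw [Finset.insert_comm, add_comm (F _)]
    exact of_lt K hK y hy x hx hlt

theorem PluckerOn.mono {E' : Finset α} (hF : PluckerOn E F) (h : E' ⊆ E) : PluckerOn E' F :=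
  fun _ _ _ _ hT => hF (by grind)

theorem PluckerOn.comp_insert (hF : PluckerOn (insert t E) F) (ht : t ∉ E) :
    PluckerOn E fun K => F (insert t K) := by
  intro K x y z hT
  simpa only [ThreeTerm, Finset.insert_comm t] using
    hF (K := insert t K) (x := x) (y := y) (z := z) (by grind)

theorem PluckerOn.insert_top_eq (hN : PluckerOn (insert t E) N) (hab : IsConsecutive E a b)
    (ht : ∀ k ∈ E, k < t) (hNM : AgreeOff (insert t E) a b N fun K => M (K.erase t))
    (hle : N (insert a (below E a)) + M (insert b (below E a)) ≤
      M (insert a (insert b (below E a))) + M (below E a)) :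
    ∀ K ⊆ E, N (insert t K) = N K := by
  have htE : t ∉ E := fun h => (ht t h).false
  have off : ∀ K ⊆ E, ¬(a ∈ K ∧ b ∉ K) → N K = M K ∧ N (insert t K) = M K := by
    intro K hK hmoved
    have htK : t ∉ K := fun h => htE (hK h)
    constructor
    · exact (hNM K (by grind) hmoved).trans (congrArg M (Finset.erase_eq_of_notMem htK))
    · exact (hNM _ (by grind) (by grind)).trans (congrArg M (Finset.erase_insert htK))
  have hbase : N (insert t (insert a (below E a))) = N (insert a (below E a)) := by
    have h : ThreeTerm N (below E a) a b t := hN (by grind [below])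
    have h₀ := off (below E a) (by grind [below]) (by grind [below])
    have h₁ := off (insert b (below E a)) (by grind [below]) (by grind)
    have h₂ := off (insert a (insert b (below E a))) (by grind [below]) (by grind)
    rw [ThreeTerm, Finset.insert_comm a t, Finset.insert_comm b t] at h
    omega
  refine ((hN.mono (Finset.subset_insert t E)).pluckerAt a b).eq_of_agreeOff
    ((hN.comp_insert htE).pluckerAt a b) hab (fun K hK hmoved => ?_) hbase
  rw [(off K hK hmoved).1, (off K hK hmoved).2]

theorem PluckerOn.exists_supermodularOn_agreeOff [NoMaxOrder α] (hM : PluckerOn E M)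
    (hs : SupermodularOn E M) (hab : IsConsecutive E a b) (c : ℤ)
    (hc : c + M (insert b (below E a)) ≤
      M (insert a (insert b (below E a))) + M (below E a)) :
    ∃ N, PluckerOn E N ∧ SupermodularOn E N ∧ AgreeOff E a b N M ∧
      N (insert a (below E a)) = c := by
  obtain ⟨t, ht⟩ : ∃ t, ∀ k ∈ E, k < t :=
    (exists_gt (E.max' ⟨a, hab.left_mem⟩)).imp fun t ht k hk => (E.le_max' k hk).trans_lt ht
  have hbelow : below (insert t E) a = below E a := by
    grind [below]
  obtain ⟨N, hN, hNM, hNc⟩ := (hM.erase_top hs ht).exists_agreeOff (a := a) (b := b)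
    (by grind) c
  rw [hbelow] at hNc
  have hinv := hN.insert_top_eq hab ht hNM (by rwa [hNc])
  refine ⟨N, hN.mono (Finset.subset_insert t E), hN.supermodularOn ht hinv, fun K hK hmoved => ?_,
    hNc⟩
  exact (hNM K (by grind) hmoved).trans (congrArg M (Finset.erase_eq_of_notMem (by grind)))

end Supermodular

section BZDatum

variable {n i : ℕ} {M M₁ M₂ : Finset ℕ → ℤ}

theorem isBZ_iff : IsBZ n M ↔ M ∅ = 0 ∧ M (Finset.Icc 1 (n + 1)) = 0 ∧
    SupermodularOn (Finset.Icc 1 (n + 1)) M ∧ PluckerOn (Finset.Icc 1 (n + 1)) M := by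
  unfold IsBZ
  refine and_congr_right fun _ => and_congr_right fun _ => and_congr ?_ ?_
  · exact ⟨fun h K hK x hx y hy hxy => h x y K (by grind) (by grind) (by grind) (by grind) hxy hK
      (by grind) (by grind), fun h x y K _ _ _ _ hxy hK _ _ =>
      h K hK x (by grind) y (by grind) hxy⟩
  · exact ⟨fun h K x y z hT => h x y z K (by grind) hT.left_lt hT.lt_right (by grind) hT.subset
      (by grind) (by grind) (by grind), fun h x y z K _ _ _ _ _ _ _ _ =>
      h (K := K) (x := x) (y := y) (z := z) (by grind)⟩

theorem isConsecutive_Icc_one (hi1 : 1 ≤ i) (hi2 : i ≤ n) :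
    IsConsecutive (Finset.Icc 1 (n + 1)) i (i + 1) := by
  constructor <;> grind

theorem below_Icc_one (hi2 : i ≤ n) : below (Finset.Icc 1 (n + 1)) i = Finset.Icc 1 (i - 1) := by
  grind [below]

theorem insert_Icc_one_pred (hi1 : 1 ≤ i) :
    insert i (Finset.Icc 1 (i - 1)) = Finset.Icc 1 i := by
  grind

theorem insert_succ_Icc_one_pred :
    insert (i + 1) (Finset.Icc 1 (i - 1)) = (Finset.Icc 1 (i + 1)).erase i := by
  grind

theorem insert_insert_succ_Icc_one_pred (hi1 : 1 ≤ i) :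
    insert i (insert (i + 1) (Finset.Icc 1 (i - 1))) = Finset.Icc 1 (i + 1) := by
  grind

theorem IsBZ.Icc_add_erase_le (hM : IsBZ n M) (hi1 : 1 ≤ i) (hi2 : i ≤ n) :
    M (Finset.Icc 1 i) + M ((Finset.Icc 1 (i + 1)).erase i) ≤
      M (Finset.Icc 1 (i + 1)) + M (Finset.Icc 1 (i - 1)) := by
  have h := (isBZ_iff.1 hM).2.2.1 (Finset.Icc 1 (i - 1)) (by grind) i (by grind) (i + 1)
    (by grind) (by grind)
  rwa [insert_Icc_one_pred hi1, insert_insert_succ_Icc_one_pred hi1,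
    insert_succ_Icc_one_pred] at h

theorem IsW0BZ.exists_agreeOff (hM : IsW0BZ n M) (hi1 : 1 ≤ i) (hi2 : i ≤ n) (c : ℤ)
    (hc : c + M ((Finset.Icc 1 (i + 1)).erase i) ≤
      M (Finset.Icc 1 (i + 1)) + M (Finset.Icc 1 (i - 1))) :
    ∃ N, IsW0BZ n N ∧ N (Finset.Icc 1 i) = c ∧
      AgreeOff (Finset.Icc 1 (n + 1)) i (i + 1) N M := by
  obtain ⟨hBZ, hw₀⟩ := hM
  obtain ⟨h0, h1, hs, hp⟩ := isBZ_iff.1 hBZ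
  obtain ⟨N, hNp, hNs, hNM, hNc⟩ :=
    hp.exists_supermodularOn_agreeOff hs (isConsecutive_Icc_one hi1 hi2) c (by
      rwa [below_Icc_one hi2, insert_insert_succ_Icc_one_pred hi1, insert_succ_Icc_one_pred])
  rw [below_Icc_one hi2, insert_Icc_one_pred hi1] at hNc
  have hN0 : N ∅ = 0 := (hNM _ (by grind) (by grind)).trans h0
  have hN1 : N (Finset.Icc 1 (n + 1)) = 0 := (hNM _ (by grind) (by grind)).trans h1
  exact ⟨N, ⟨isBZ_iff.2 ⟨hN0, hN1, hNs, hNp⟩, fun j hj1 hj2 =>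
    (hNM _ (by grind) (by grind)).trans (hw₀ j hj1 hj2)⟩, hNc, hNM⟩

theorem IsBZ.eq_of_agreeOff (h₁ : IsBZ n M₁) (h₂ : IsBZ n M₂) (hi1 : 1 ≤ i) (hi2 : i ≤ n)
    (hoff : AgreeOff (Finset.Icc 1 (n + 1)) i (i + 1) M₁ M₂)
    (h : M₁ (Finset.Icc 1 i) = M₂ (Finset.Icc 1 i)) :
    ∀ K ⊆ Finset.Icc 1 (n + 1), M₁ K = M₂ K := by
  obtain ⟨-, -, -, hp₁⟩ := isBZ_iff.1 h₁
  obtain ⟨-, -, -, hp₂⟩ := isBZ_iff.1 h₂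
  refine (hp₂.pluckerAt i (i + 1)).eq_of_agreeOff (hp₁.pluckerAt i (i + 1))
    (isConsecutive_Icc_one hi1 hi2) hoff ?_
  rwa [below_Icc_one hi2, insert_Icc_one_pred hi1]

end BZDatum

/-- Kamnitzer: let `M` be a `w₀`-BZ datum, `i ∈ [1,n]`, and set
`ε_i(M) = −(M_{[1,i]} + M_{[1,i+1]∖{i}} − M_{[1,i+1]} − M_{[1,i−1]})`; it is nonnegative.
(1) If `ε_i(M) > 0` there is a unique `w₀`-BZ datum `M'` (unique as a collection, i.e. on
Maya diagrams `K ⊆ [1,n+1]`) with `M'_{[1,i]} = M_{[1,i]} + 1` and `M'_K = M_K` for all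
`K ∉ M_n^×(i) = {K : i ∈ K, i+1 ∉ K}`.  (2) There is a unique `w₀`-BZ datum `M''` with
`M''_{[1,i]} = M_{[1,i]} − 1` and `M''_K = M_K` for all `K ∉ M_n^×(i)`. -/
theorem stmt7 (n : ℕ) (hn : 1 ≤ n) (M : Finset ℕ → ℤ) (hM : IsW0BZ n M)
    (i : ℕ) (hi1 : 1 ≤ i) (hi2 : i ≤ n) :
    0 ≤ -(M (Finset.Icc 1 i) + M ((Finset.Icc 1 (i + 1)).erase i) -
        M (Finset.Icc 1 (i + 1)) - M (Finset.Icc 1 (i - 1))) ∧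
    (0 < -(M (Finset.Icc 1 i) + M ((Finset.Icc 1 (i + 1)).erase i) -
        M (Finset.Icc 1 (i + 1)) - M (Finset.Icc 1 (i - 1))) →
      ((∃ M' : Finset ℕ → ℤ, IsW0BZ n M' ∧
          M' (Finset.Icc 1 i) = M (Finset.Icc 1 i) + 1 ∧
          ∀ K : Finset ℕ, K ⊆ Finset.Icc 1 (n + 1) → ¬(i ∈ K ∧ i + 1 ∉ K) → M' K = M K) ∧
        ∀ M₁ M₂ : Finset ℕ → ℤ,
          (IsW0BZ n M₁ ∧ M₁ (Finset.Icc 1 i) = M (Finset.Icc 1 i) + 1 ∧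
            ∀ K : Finset ℕ, K ⊆ Finset.Icc 1 (n + 1) → ¬(i ∈ K ∧ i + 1 ∉ K) → M₁ K = M K) →
          (IsW0BZ n M₂ ∧ M₂ (Finset.Icc 1 i) = M (Finset.Icc 1 i) + 1 ∧
            ∀ K : Finset ℕ, K ⊆ Finset.Icc 1 (n + 1) → ¬(i ∈ K ∧ i + 1 ∉ K) → M₂ K = M K) →
          ∀ K : Finset ℕ, K ⊆ Finset.Icc 1 (n + 1) → M₁ K = M₂ K)) ∧
    ((∃ M'' : Finset ℕ → ℤ, IsW0BZ n M'' ∧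
        M'' (Finset.Icc 1 i) = M (Finset.Icc 1 i) - 1 ∧
        ∀ K : Finset ℕ, K ⊆ Finset.Icc 1 (n + 1) → ¬(i ∈ K ∧ i + 1 ∉ K) → M'' K = M K) ∧
      ∀ M₁ M₂ : Finset ℕ → ℤ,
        (IsW0BZ n M₁ ∧ M₁ (Finset.Icc 1 i) = M (Finset.Icc 1 i) - 1 ∧
          ∀ K : Finset ℕ, K ⊆ Finset.Icc 1 (n + 1) → ¬(i ∈ K ∧ i + 1 ∉ K) → M₁ K = M K) →
        (IsW0BZ n M₂ ∧ M₂ (Finset.Icc 1 i) = M (Finset.Icc 1 i) - 1 ∧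
          ∀ K : Finset ℕ, K ⊆ Finset.Icc 1 (n + 1) → ¬(i ∈ K ∧ i + 1 ∉ K) → M₂ K = M K) →
        ∀ K : Finset ℕ, K ⊆ Finset.Icc 1 (n + 1) → M₁ K = M₂ K) := by
  have hle := hM.1.Icc_add_erase_le hi1 hi2
  have unique : ∀ c : ℤ, ∀ M₁ M₂ : Finset ℕ → ℤ,
      (IsW0BZ n M₁ ∧ M₁ (Finset.Icc 1 i) = c ∧
        AgreeOff (Finset.Icc 1 (n + 1)) i (i + 1) M₁ M) →
      (IsW0BZ n M₂ ∧ M₂ (Finset.Icc 1 i) = c ∧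
        AgreeOff (Finset.Icc 1 (n + 1)) i (i + 1) M₂ M) →
      ∀ K ⊆ Finset.Icc 1 (n + 1), M₁ K = M₂ K := by
    rintro c M₁ M₂ ⟨h₁, hc₁, hoff₁⟩ ⟨h₂, hc₂, hoff₂⟩
    exact h₁.1.eq_of_agreeOff h₂.1 hi1 hi2
      (fun K hK hmoved => (hoff₁ K hK hmoved).trans (hoff₂ K hK hmoved).symm)
      (hc₁.trans hc₂.symm)
  exact ⟨by omega, fun _ => ⟨hM.exists_agreeOff hi1 hi2 _ (by omega), unique _⟩,
    hM.exists_agreeOff hi1 hi2 _ (by omega), unique _⟩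
end
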